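/- arXiv:2206.06742 — 4 statements merged into one kernel-verified Lean document; each statement's English description precedes it below -/
import Mathlib

section
/- Assume ρ > 0 and that the Dirichlet eigenpair hypothesis holds for (Ω, λ₁, φ). If there exists u ∈ C²(C_Ω^ρ) with u > 0 on C_Ω^ρ and −Δu(x) − μ|x|^{−2}u(x) ≥ 0 for all x ∈ C_Ω^ρ, then μ ≤ C_{H,Ω} = λ₁ + ((N−2)/2)². -/
open MeasureTheory Real Set
open scoped ENNReal NNReal

noncomputable section

/-- Euclidean space `ℝ^N`. -/
abbrev Euc (N : ℕ) := EuclideanSpace ℝ (Fin N)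

/-- The Euclidean Laplacian `Δu(x) = ∑ ∂²u/∂xᵢ²(x)`, the trace of the Hessian. -/
def lap (N : ℕ) (u : Euc N → ℝ) (x : Euc N) : ℝ :=
  ∑ i : Fin N,
    iteratedFDeriv ℝ 2 u x ![EuclideanSpace.single i 1, EuclideanSpace.single i 1]

/-- The open cone `C_Ω^ρ = {x : |x| > ρ, x/|x| ∈ Ω}`. -/
def coneGT (N : ℕ) (ρ : ℝ) (Ω : Set (Euc N)) : Set (Euc N) :=
  {x | ρ < ‖x‖ ∧ ‖x‖⁻¹ • x ∈ Ω}

/-- The full open cone `C_Ω = {x ≠ 0 : x/|x| ∈ Ω}`. -/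
def cone (N : ℕ) (Ω : Set (Euc N)) : Set (Euc N) :=
  {x | x ≠ 0 ∧ ‖x‖⁻¹ • x ∈ Ω}

/-- `Ω` is a nonempty, connected, relatively open subset of the unit sphere `S^{N-1}`. -/
def IsConeDomain (N : ℕ) (Ω : Set (Euc N)) : Prop :=
  Ω ⊆ Metric.sphere (0 : Euc N) 1 ∧ IsConnected Ω ∧
    IsOpen {ω : Metric.sphere (0 : Euc N) 1 | (ω : Euc N) ∈ Ω}

/-- The convolution `(|x|^{-α} * f)(x) = ∫_{C_Ω^ρ} f(y)|x-y|^{-α} dy`, valued in `[0,∞]`. -/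
def rieszConv (N : ℕ) (α ρ : ℝ) (Ω : Set (Euc N)) (f : Euc N → ℝ) (x : Euc N) : ℝ≥0∞ :=
  ∫⁻ y in coneGT N ρ Ω, ENNReal.ofReal (f y * ‖x - y‖ ^ (-α))

/-- Dirichlet eigenpair hypothesis for `(Ω, λ₁, φ)`: `φ` is continuous on the closure of `Ω`,
positive on `Ω`, vanishing on the relative boundary, with maximum `1`, and its 0-homogeneous
extension `Φ(x) = φ(x/|x|)` is `C²` on the open cone and satisfies `ΔΦ = -λ₁|x|⁻²Φ`. -/
structure DirichletEigenpair (N : ℕ) (Ω : Set (Euc N)) (lam1 : ℝ) (φ : Euc N → ℝ) : Prop where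
  contOn : ContinuousOn φ (closure Ω)
  pos : ∀ ω ∈ Ω, 0 < φ ω
  bdryZero : ∀ ω ∈ closure Ω \ Ω, φ ω = 0
  le_one : ∀ ω ∈ closure Ω, φ ω ≤ 1
  max_one : ∃ ω ∈ closure Ω, φ ω = 1
  smoothExt : ContDiffOn ℝ 2 (fun x => φ (‖x‖⁻¹ • x)) (cone N Ω)
  eigen : ∀ x ∈ cone N Ω,
    lap N (fun y => φ (‖y‖⁻¹ • y)) x = -lam1 * ‖x‖ ^ (-(2:ℝ)) * φ (‖x‖⁻¹ • x)

/-- The Hardy constant `C_{H,Ω} = λ₁ + ((N-2)/2)²`. -/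
def CHconst (N : ℕ) (lam1 : ℝ) : ℝ := lam1 + (((N : ℝ) - 2) / 2) ^ 2

/-- The smaller root `γ_*` of `γ(γ + N - 2) = λ₁ - μ`. -/
def gammaStar (N : ℕ) (lam1 μ : ℝ) : ℝ :=
  (-((N : ℝ) - 2) - Real.sqrt (((N : ℝ) - 2) ^ 2 + 4 * (lam1 - μ))) / 2

/-- A positive (classical) solution of `(E) : -Δu - μ|x|⁻²u ≥ (|x|^{-α} * uᵖ) u^q` in `C_Ω^ρ`. -/
def IsPosSolE (N : ℕ) (ρ μ α p q : ℝ) (Ω : Set (Euc N)) (u : Euc N → ℝ) : Prop :=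
  ContDiffOn ℝ 2 u (coneGT N ρ Ω) ∧
  ContinuousOn u (closure (coneGT N ρ Ω)) ∧
  (∀ x ∈ coneGT N ρ Ω, 0 < u x) ∧
  (∀ x ∈ coneGT N ρ Ω, rieszConv N α ρ Ω (fun y => u y ^ p) x < ⊤) ∧
  (∀ x ∈ coneGT N ρ Ω,
    (rieszConv N α ρ Ω (fun y => u y ^ p) x).toReal * u x ^ q ≤
      -lap N u x - μ * ‖x‖ ^ (-(2:ℝ)) * u x)

/-- A positive solution of `(Z) : -Δu - μ|x|⁻²u ≥ (∫_{C_Ω^ρ} uᵖ) u^q` in `C_Ω^ρ`. -/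
def IsPosSolZ (N : ℕ) (ρ μ p q : ℝ) (Ω : Set (Euc N)) (u : Euc N → ℝ) : Prop :=
  ContDiffOn ℝ 2 u (coneGT N ρ Ω) ∧
  ContinuousOn u (closure (coneGT N ρ Ω)) ∧
  (∀ x ∈ coneGT N ρ Ω, 0 < u x) ∧
  (∫⁻ y in coneGT N ρ Ω, ENNReal.ofReal (u y ^ p)) < ⊤ ∧
  (∀ x ∈ coneGT N ρ Ω,
    (∫⁻ y in coneGT N ρ Ω, ENNReal.ofReal (u y ^ p)).toReal * u x ^ q ≤
      -lap N u x - μ * ‖x‖ ^ (-(2:ℝ)) * u x)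

/-- A positive solution `(u, v)` of the system `(S)` in `C_Ω^ρ`. -/
def IsPosSolS (N : ℕ) (ρ μ α p q s : ℝ) (Ω : Set (Euc N)) (u v : Euc N → ℝ) : Prop :=
  ContDiffOn ℝ 2 u (coneGT N ρ Ω) ∧ ContinuousOn u (closure (coneGT N ρ Ω)) ∧
  ContDiffOn ℝ 2 v (coneGT N ρ Ω) ∧ ContinuousOn v (closure (coneGT N ρ Ω)) ∧
  (∀ x ∈ coneGT N ρ Ω, 0 < u x) ∧ (∀ x ∈ coneGT N ρ Ω, 0 < v x) ∧
  (∀ x ∈ coneGT N ρ Ω, rieszConv N α ρ Ω (fun y => v y ^ p) x < ⊤) ∧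
  (∀ x ∈ coneGT N ρ Ω,
    (rieszConv N α ρ Ω (fun y => v y ^ p) x).toReal * v x ^ q ≤
      -lap N u x - μ * ‖x‖ ^ (-(2:ℝ)) * u x) ∧
  (∀ x ∈ coneGT N ρ Ω, u x ^ s ≤ -lap N v x - μ * ‖x‖ ^ (-(2:ℝ)) * v x)

/-!
Suppose `μ > C_{H,Ω}` and pick `κ > 0` with `C_{H,Ω} + κ² < μ`. In the variable `t = log |x|` the
radial part of the Hardy equation has constant coefficients, so
`W(x) = |x|^{-(N-2)/2} sin (κ (t - l)) φ(x / |x|)` satisfies `-ΔW ≤ (C_{H,Ω} + κ²) |x|⁻² W`, is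
positive on a shell of the cone and vanishes on its boundary. A positive supersolution `u` gives,
by the Allegretto–Piepenbrink argument (`|∇w|² ≥ -(Δu / u) w²` in the mean, for test functions
`w`), the inequality `μ ∫ |x|⁻² W² ≤ (C_{H,Ω} + κ²) ∫ |x|⁻² W²`, a contradiction. Since `∇W` need
not be controlled at the boundary of a rough cone, `W` itself is not an admissible test function;
it is replaced by the compactly supported `C²` functions `F(nW) / n`, where `F` is a smooth convex
version of `s ↦ (s - 1)⁺`, and `n → ∞`.
-/

open Filter Gradient InnerProductSpace Laplacian Topology

section Calculus

variable {E : Type*} [NormedAddCommGroup E] [NormedSpace ℝ E] {f g : E → ℝ} {x : E}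

theorem differentiableAt_fderiv {F : Type*} [NormedAddCommGroup F] [NormedSpace ℝ F] {f : E → F}
    (hf : ContDiffAt ℝ 2 f x) : DifferentiableAt ℝ (fderiv ℝ f) x :=
  (hf.fderiv_right (m := 1) (by norm_num)).differentiableAt one_ne_zero

theorem fderiv_fderiv_mul (hf : ContDiffAt ℝ 2 f x) (hg : ContDiffAt ℝ 2 g x) :
    fderiv ℝ (fderiv ℝ fun y => f y * g y) x =
      f x • fderiv ℝ (fderiv ℝ g) x + (fderiv ℝ f x).smulRight (fderiv ℝ g x) +
        (g x • fderiv ℝ (fderiv ℝ f) x + (fderiv ℝ g x).smulRight (fderiv ℝ f x)) := by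
  have hfderiv : fderiv ℝ (fun y => f y * g y) =ᶠ[𝓝 x]
      fun y => f y • fderiv ℝ g y + g y • fderiv ℝ f y := by
    filter_upwards [hf.eventually (by simp), hg.eventually (by simp)] with y hfy hgy
    exact fderiv_fun_mul (hfy.differentiableAt two_ne_zero) (hgy.differentiableAt two_ne_zero)
  have hf' := hf.differentiableAt two_ne_zero
  have hg' := hg.differentiableAt two_ne_zero
  rw [hfderiv.fderiv_eq, fderiv_fun_add (hf'.fun_smul (differentiableAt_fderiv hg))
    (hg'.fun_smul (differentiableAt_fderiv hf)), fderiv_fun_smul hf' (differentiableAt_fderiv hg),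
    fderiv_fun_smul hg' (differentiableAt_fderiv hf)]

theorem fderiv_fderiv_comp {F : ℝ → ℝ} (hF : ContDiffAt ℝ 2 F (f x)) (hf : ContDiffAt ℝ 2 f x) :
    fderiv ℝ (fderiv ℝ fun y => F (f y)) x =
      deriv F (f x) • fderiv ℝ (fderiv ℝ f) x +
        (deriv (deriv F) (f x) • fderiv ℝ f x).smulRight (fderiv ℝ f x) := by
  have hfderiv : fderiv ℝ (fun y => F (f y)) =ᶠ[𝓝 x] fun y => deriv F (f y) • fderiv ℝ f y := by
    filter_upwards [hf.continuousAt.eventually (hF.eventually (by simp)),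
      hf.eventually (by simp)] with y hFy hfy
    exact ((hFy.differentiableAt two_ne_zero).hasDerivAt.comp_hasFDerivAt y
      (hfy.differentiableAt two_ne_zero).hasFDerivAt).fderiv
  have hF' : DifferentiableAt ℝ (deriv F) (f x) :=
    (hF.derivWithin (m := 1) (by norm_num)).differentiableAt one_ne_zero
  rw [hfderiv.fderiv_eq]
  exact ((hF'.hasDerivAt.comp_hasFDerivAt x (hf.differentiableAt two_ne_zero).hasFDerivAt).smul
    (differentiableAt_fderiv hf).hasFDerivAt).fderiv

end Calculus

section Laplacian

variable {E : Type*} [NormedAddCommGroup E] [InnerProductSpace ℝ E] {f g : E → ℝ} {x : E}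

theorem gradient_comp [CompleteSpace E] {F : ℝ → ℝ} (hF : DifferentiableAt ℝ F (f x))
    (hf : DifferentiableAt ℝ f x) :
    ∇ (fun y => F (f y)) x = deriv F (f x) • ∇ f x := by
  have hfderiv := (hF.hasDerivAt.comp_hasFDerivAt x hf.hasFDerivAt).fderiv
  simp only [Function.comp_def] at hfderiv
  simp only [gradient, hfderiv, map_smul]

variable [FiniteDimensional ℝ E]

theorem inner_gradient_gradient_eq_sum {ι : Type*} [Fintype ι] (b : OrthonormalBasis ι ℝ E) :
    ⟪∇ f x, ∇ g x⟫_ℝ = ∑ i, fderiv ℝ f x (b i) * fderiv ℝ g x (b i) := by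
  rw [← b.sum_inner_mul_inner]
  exact Finset.sum_congr rfl fun i _ => by
    rw [inner_gradient_left, real_inner_comm, inner_gradient_left]

theorem laplacian_eq_sum_fderiv_fderiv {ι : Type*} [Fintype ι] (b : OrthonormalBasis ι ℝ E) :
    Δ f x = ∑ i, fderiv ℝ (fderiv ℝ f) x (b i) (b i) := by
  simp [laplacian_eq_iteratedFDeriv_orthonormalBasis f b, iteratedFDeriv_two_apply]

theorem laplacian_mul (hf : ContDiffAt ℝ 2 f x) (hg : ContDiffAt ℝ 2 g x) :
    Δ (fun y => f y * g y) x = f x * Δ g x + 2 * ⟪∇ f x, ∇ g x⟫_ℝ + g x * Δ f x := by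
  let b := stdOrthonormalBasis ℝ E
  simp only [laplacian_eq_sum_fderiv_fderiv b, inner_gradient_gradient_eq_sum b,
    fderiv_fderiv_mul hf hg, Finset.mul_sum, ← Finset.sum_add_distrib]
  refine Finset.sum_congr rfl fun i _ => ?_
  simp
  ring

theorem laplacian_comp {F : ℝ → ℝ} (hF : ContDiffAt ℝ 2 F (f x)) (hf : ContDiffAt ℝ 2 f x) :
    Δ (fun y => F (f y)) x = deriv (deriv F) (f x) * ‖∇ f x‖ ^ 2 + deriv F (f x) * Δ f x := by
  let b := stdOrthonormalBasis ℝ E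
  simp only [laplacian_eq_sum_fderiv_fderiv b, ← real_inner_self_eq_norm_sq,
    inner_gradient_gradient_eq_sum b, fderiv_fderiv_comp hF hf, Finset.mul_sum,
    ← Finset.sum_add_distrib]
  refine Finset.sum_congr rfl fun i _ => ?_
  simp
  ring

end Laplacian

section IntegrationByParts

theorem integrable_mul_of_continuousOn_tsupport {X : Type*} [TopologicalSpace X] [T2Space X]
    [MeasurableSpace X] [OpensMeasurableSpace X] {ν : Measure X} [IsFiniteMeasureOnCompacts ν]
    {v w : X → ℝ} (hw : Continuous w) (hwc : HasCompactSupport w)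
    (hv : ContinuousOn v (tsupport w)) : Integrable (fun x => w x * v x) ν := by
  have hsupp : Function.support (fun x => w x * v x) ⊆ tsupport w :=
    (Function.support_mul_subset_left w v).trans (subset_tsupport w)
  exact (integrableOn_iff_integrable_of_support_subset hsupp).1
    ((hw.continuousOn.mul hv).integrableOn_compact hwc)

variable {E : Type*} [NormedAddCommGroup E] [NormedSpace ℝ E] {D : Set E}

theorem continuousOn_fderiv_fderiv_apply {F : Type*} [NormedAddCommGroup F] [NormedSpace ℝ F]
    {v : E → F} (hD : IsOpen D) (hv : ContDiffOn ℝ 2 v D) (e : E) :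
    ContinuousOn (fun x => fderiv ℝ (fderiv ℝ v) x e e) D :=
  (((hv.fderiv_of_isOpen hD (m := 1) (by norm_num)).continuousOn_fderiv_of_isOpen hD
    le_rfl).clm_apply continuousOn_const).clm_apply continuousOn_const

variable [MeasurableSpace E] [BorelSpace E] {ν : Measure E} {v w : E → ℝ}

theorem integrable_mul_fderiv_fderiv [IsFiniteMeasureOnCompacts ν] (hD : IsOpen D)
    (hv : ContDiffOn ℝ 2 v D) (hw : Continuous w) (hwc : HasCompactSupport w)
    (hwD : tsupport w ⊆ D) (e : E) :
    Integrable (fun x => w x * fderiv ℝ (fderiv ℝ v) x e e) ν :=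
  integrable_mul_of_continuousOn_tsupport hw hwc
    ((continuousOn_fderiv_fderiv_apply hD hv e).mono hwD)

theorem integrable_fderiv_mul_fderiv [IsFiniteMeasureOnCompacts ν] (hD : IsOpen D)
    (hv : ContDiffOn ℝ 1 v D) (hw : ContDiff ℝ 1 w) (hwc : HasCompactSupport w)
    (hwD : tsupport w ⊆ D) (e : E) :
    Integrable (fun x => fderiv ℝ w x e * fderiv ℝ v x e) ν :=
  integrable_mul_of_continuousOn_tsupport
    ((hw.continuous_fderiv one_ne_zero).clm_apply continuous_const) (hwc.fderiv_apply ℝ e)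
    (((hv.continuousOn_fderiv_of_isOpen hD le_rfl).clm_apply continuousOn_const).mono
      ((tsupport_fderiv_apply_subset ℝ e).trans hwD))

theorem integral_mul_fderiv_fderiv [FiniteDimensional ℝ E] [ν.IsAddHaarMeasure] (hD : IsOpen D)
    (hv : ContDiffOn ℝ 2 v D) (hw : ContDiff ℝ 1 w) (hwc : HasCompactSupport w)
    (hwD : tsupport w ⊆ D) (e : E) :
    ∫ x, w x * fderiv ℝ (fderiv ℝ v) x e e ∂ν = -∫ x, fderiv ℝ w x e * fderiv ℝ v x e ∂ν := by
  have hv1 : ContDiffOn ℝ 1 v D := hv.of_le (by norm_num)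
  have hderiv (x) (hx : x ∈ D) : HasFDerivAt (fun y => fderiv ℝ v y e)
      ((fderiv ℝ (fderiv ℝ v) x).flip e) x := by
    simpa using (differentiableAt_fderiv (hv.contDiffAt (hD.mem_nhds hx))).hasFDerivAt.clm_apply
      (hasFDerivAt_const e x)
  have hhess : (fun x => w x * fderiv ℝ (fderiv ℝ v) x e e) =
      fun x => w x * fderiv ℝ (fun y => fderiv ℝ v y e) x e := funext fun x => by
    by_cases hx : x ∈ tsupport w
    · simp [(hderiv x (hwD hx)).fderiv]
    · simp [image_eq_zero_of_notMem_tsupport hx]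
  have hint := integrable_mul_fderiv_fderiv (ν := ν) hD hv hw.continuous hwc hwD e
  rw [hhess] at hint ⊢
  exact integral_mul_fderiv_eq_neg_fderiv_mul_of_integrable
    (integrable_fderiv_mul_fderiv hD hv1 hw hwc hwD e) hint
    (integrable_mul_of_continuousOn_tsupport hw.continuous hwc
      (((hv1.continuousOn_fderiv_of_isOpen hD le_rfl).clm_apply continuousOn_const).mono hwD))
    (fun x _ => hw.differentiable one_ne_zero x)
    fun x hx => (hderiv x (hwD hx)).differentiableAt

end IntegrationByParts

section Green

variable {E : Type*} [NormedAddCommGroup E] [InnerProductSpace ℝ E] {D : Set E} {v w : E → ℝ}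

theorem continuousOn_gradient [CompleteSpace E] (hD : IsOpen D) (hv : ContDiffOn ℝ 1 v D) :
    ContinuousOn (∇ v) D :=
  (toDual ℝ E).symm.continuous.comp_continuousOn (hv.continuousOn_fderiv_of_isOpen hD le_rfl)

theorem continuous_gradient [CompleteSpace E] (hw : ContDiff ℝ 1 w) : Continuous (∇ w) :=
  (toDual ℝ E).symm.continuous.comp (hw.continuous_fderiv one_ne_zero)

theorem hasCompactSupport_gradient [CompleteSpace E] (hw : HasCompactSupport w) :
    HasCompactSupport (∇ w) :=
  (hw.fderiv ℝ).comp_left (map_zero (toDual ℝ E).symm)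

variable [FiniteDimensional ℝ E]

theorem continuousOn_laplacian (hD : IsOpen D) (hv : ContDiffOn ℝ 2 v D) :
    ContinuousOn (Δ v) D := by
  rw [show Δ v = _ from
    funext fun _ => laplacian_eq_sum_fderiv_fderiv (stdOrthonormalBasis ℝ E)]
  exact continuousOn_finsetSum _ fun i _ => continuousOn_fderiv_fderiv_apply hD hv _

variable [MeasurableSpace E] [BorelSpace E]

theorem integrable_norm_gradient_sq (hw : ContDiff ℝ 1 w) (hwc : HasCompactSupport w) :
    Integrable fun x => ‖∇ w x‖ ^ 2 := by
  have hgw := (continuous_gradient hw).norm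
  simpa only [sq] using integrable_mul_of_continuousOn_tsupport hgw
    (hasCompactSupport_gradient hwc).norm hgw.continuousOn

theorem integral_mul_laplacian (hD : IsOpen D) (hv : ContDiffOn ℝ 2 v D) (hw : ContDiff ℝ 1 w)
    (hwc : HasCompactSupport w) (hwD : tsupport w ⊆ D) :
    ∫ x, w x * Δ v x = -∫ x, ⟪∇ w x, ∇ v x⟫_ℝ := by
  let b := stdOrthonormalBasis ℝ E
  have hv1 : ContDiffOn ℝ 1 v D := hv.of_le (by norm_num)
  simp only [laplacian_eq_sum_fderiv_fderiv b, inner_gradient_gradient_eq_sum b, Finset.mul_sum]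
  rw [integral_finsetSum _ fun i _ =>
      integrable_mul_fderiv_fderiv hD hv hw.continuous hwc hwD (b i),
    integral_finsetSum _ fun i _ => integrable_fderiv_mul_fderiv hD hv1 hw hwc hwD (b i),
    ← Finset.sum_neg_distrib]
  exact Finset.sum_congr rfl fun i _ => integral_mul_fderiv_fderiv hD hv hw hwc hwD (b i)

end Green

section AllegrettoPiepenbrink

variable {E : Type*} [NormedAddCommGroup E] [InnerProductSpace ℝ E] [FiniteDimensional ℝ E]
  {D : Set E} {u v w : E → ℝ}

theorem laplacian_div_eq {x : E} (hu : ContDiffAt ℝ 2 u x) (hu0 : u x ≠ 0) :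
    Δ u x / u x = Δ (fun y => log (u y)) x + ‖∇ (fun y => log (u y)) x‖ ^ 2 := by
  rw [laplacian_comp (contDiffAt_log.2 hu0) hu, gradient_comp (differentiableAt_log hu0)
    (hu.differentiableAt two_ne_zero), norm_smul, mul_pow, norm_eq_abs, sq_abs, deriv_log',
    deriv_inv]
  ring

variable [MeasurableSpace E] [BorelSpace E]

theorem integral_sq_mul_laplacian (hD : IsOpen D) (hv : ContDiffOn ℝ 2 v D)
    (hw : ContDiff ℝ 1 w) (hwc : HasCompactSupport w) (hwD : tsupport w ⊆ D) :
    ∫ x, w x ^ 2 * Δ v x = -∫ x, w x * (2 * ⟪∇ w x, ∇ v x⟫_ℝ) := by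
  have hgrad (x) : ∇ (fun y => w y ^ 2) x = (2 * w x) • ∇ w x := by
    rw [gradient_comp (F := (· ^ 2)) (by fun_prop) (hw.differentiable one_ne_zero x)]
    simp
  have hw2D : tsupport (fun x => w x ^ 2) ⊆ D :=
    (closure_mono fun x hx => by simpa using hx).trans hwD
  rw [integral_mul_laplacian hD hv (hw.pow 2) (hwc.comp_left (g := (· ^ 2)) (by simp)) hw2D]
  simp only [hgrad, real_inner_smul_left, mul_left_comm, mul_assoc]

theorem integrable_sq_mul_neg_laplacian_div (hD : IsOpen D) (hu : ContDiffOn ℝ 2 u D)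
    (hu0 : ∀ x ∈ D, u x ≠ 0) (hw : Continuous w) (hwc : HasCompactSupport w)
    (hwD : tsupport w ⊆ D) : Integrable fun x => w x ^ 2 * (-(Δ u x / u x)) := by
  have hquot : ContinuousOn (fun x => w x * (-(Δ u x / u x))) D :=
    hw.continuousOn.mul ((continuousOn_laplacian hD hu).div hu.continuousOn hu0).neg
  simpa only [sq, mul_assoc] using
    integrable_mul_of_continuousOn_tsupport hw hwc (hquot.mono hwD)

theorem integral_sq_mul_neg_laplacian_div_le (hD : IsOpen D) (hu : ContDiffOn ℝ 2 u D)
    (hu0 : ∀ x ∈ D, 0 < u x) (hw : ContDiff ℝ 1 w) (hwc : HasCompactSupport w)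
    (hwD : tsupport w ⊆ D) :
    ∫ x, w x ^ 2 * (-(Δ u x / u x)) ≤ ∫ x, ‖∇ w x‖ ^ 2 := by
  set v : E → ℝ := fun x => log (u x)
  have hv : ContDiffOn ℝ 2 v D := hu.log fun x hx => (hu0 x hx).ne'
  have hgv : ContinuousOn (∇ v) D := continuousOn_gradient hD (hv.of_le (by norm_num))
  have hgw : Continuous (∇ w) := continuous_gradient hw
  have hint {f : E → ℝ} (hf : ContinuousOn f D) : Integrable fun x => w x * f x :=
    integrable_mul_of_continuousOn_tsupport hw.continuous hwc (hf.mono hwD)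
  have hlap_int : Integrable fun x => w x ^ 2 * Δ v x := by
    simpa only [sq, mul_assoc] using
      hint (hw.continuous.continuousOn.fun_mul (continuousOn_laplacian hD hv))
  have hcross_int : Integrable fun x => w x * (2 * ⟪∇ w x, ∇ v x⟫_ℝ) :=
    hint (continuousOn_const.mul (hgw.continuousOn.inner hgv))
  have henergy_int := integrable_norm_gradient_sq hw hwc
  calc ∫ x, w x ^ 2 * (-(Δ u x / u x))
      ≤ ∫ x, (‖∇ w x‖ ^ 2 - (w x ^ 2 * Δ v x + w x * (2 * ⟪∇ w x, ∇ v x⟫_ℝ))) := by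
        refine integral_mono (integrable_sq_mul_neg_laplacian_div hD hu
          (fun x hx => (hu0 x hx).ne') hw.continuous hwc hwD)
          (henergy_int.sub (hlap_int.add hcross_int)) fun x => ?_
        by_cases hx : x ∈ tsupport w
        · have hsq := norm_sub_sq_real (∇ w x) (w x • ∇ v x)
          rw [real_inner_smul_right, norm_smul, mul_pow, norm_eq_abs, sq_abs] at hsq
          have hxD := hwD hx
          simp only [laplacian_div_eq (hu.contDiffAt (hD.mem_nhds hxD)) (hu0 x hxD).ne']
          linarith [sq_nonneg ‖∇ w x - w x • ∇ v x‖]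
        · simp [image_eq_zero_of_notMem_tsupport hx]
    _ = ∫ x, ‖∇ w x‖ ^ 2 := by
        rw [integral_sub henergy_int (hlap_int.fun_add hcross_int),
          integral_add hlap_int hcross_int, integral_sq_mul_laplacian hD hv hw hwc hwD]
        ring

theorem integral_mul_laplacian_self (hw : ContDiff ℝ 2 w) (hwc : HasCompactSupport w) :
    ∫ x, w x * Δ w x = -∫ x, ‖∇ w x‖ ^ 2 := by
  simpa only [real_inner_self_eq_norm_sq] using integral_mul_laplacian isOpen_univ hw.contDiffOn
    (hw.of_le (by norm_num)) hwc (subset_univ _)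

theorem integral_sq_mul_neg_laplacian_div_add_nonpos (hD : IsOpen D) (hu : ContDiffOn ℝ 2 u D)
    (hu0 : ∀ x ∈ D, 0 < u x) (hw : ContDiff ℝ 2 w) (hwc : HasCompactSupport w)
    (hwD : tsupport w ⊆ D) :
    Integrable (fun x => w x ^ 2 * (-(Δ u x / u x)) + w x * Δ w x) ∧
      ∫ x, (w x ^ 2 * (-(Δ u x / u x)) + w x * Δ w x) ≤ 0 := by
  have hu_int := integrable_sq_mul_neg_laplacian_div hD hu (fun x hx => (hu0 x hx).ne')
    hw.continuous hwc hwD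
  have hw_int : Integrable fun x => w x * Δ w x :=
    integrable_mul_of_continuousOn_tsupport hw.continuous hwc
      ((continuousOn_laplacian isOpen_univ hw.contDiffOn).mono (subset_univ _))
  refine ⟨hu_int.add hw_int, ?_⟩
  rw [integral_add hu_int hw_int, integral_mul_laplacian_self hw hwc]
  linarith [integral_sq_mul_neg_laplacian_div_le hD hu hu0 (hw.of_le (by norm_num)) hwc hwD]

end AllegrettoPiepenbrink

section SoftThreshold

/-- A smooth convex nondecreasing version of `t ↦ max (t - 1) 0`, vanishing on `(-∞, 1]` and
asymptotic to the identity at `+∞`; it truncates a function near its zero set. -/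
def softThreshold (t : ℝ) : ℝ := (t - 1) * expNegInvGlue (t - 1)

variable {t : ℝ}

theorem softThreshold_of_le_one (ht : t ≤ 1) : softThreshold t = 0 := by
  rw [softThreshold, expNegInvGlue.zero_of_nonpos (sub_nonpos.2 ht), mul_zero]

theorem contDiff_softThreshold {n : ℕ∞} : ContDiff ℝ n softThreshold :=
  have hsub : ContDiff ℝ n fun t : ℝ => t - 1 := by fun_prop
  hsub.mul (expNegInvGlue.contDiff.comp hsub)

theorem hasDerivAt_expNegInvGlue (y : ℝ) :
    HasDerivAt expNegInvGlue (y⁻¹ ^ 2 * expNegInvGlue y) y := by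
  simpa using expNegInvGlue.hasDerivAt_polynomial_eval_inv_mul 1 y

open Polynomial in
theorem hasDerivAt_one_add_inv_mul_expNegInvGlue (y : ℝ) :
    HasDerivAt (fun y => (1 + y⁻¹) * expNegInvGlue y) (y⁻¹ ^ 3 * expNegInvGlue y) y := by
  convert expNegInvGlue.hasDerivAt_polynomial_eval_inv_mul (1 + X) y using 2
  · simp
  · simp only [derivative_add, derivative_one, derivative_X, eval_mul, eval_pow, eval_X, eval_sub,
      eval_add, eval_one, eval_zero]
    ring

theorem deriv_softThreshold :
    deriv softThreshold = fun t => (1 + (t - 1)⁻¹) * expNegInvGlue (t - 1) := by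
  funext t
  have hsub := (hasDerivAt_id t).sub_const 1
  refine (hsub.mul ((hasDerivAt_expNegInvGlue _).comp t hsub)).deriv.trans ?_
  simp only [id_eq, Function.comp_apply, one_mul, mul_one]
  rcases eq_or_ne (t - 1) 0 with h0 | h0
  · simp [h0]
  · field_simp

theorem deriv_deriv_softThreshold_nonneg (t : ℝ) : 0 ≤ deriv (deriv softThreshold) t := by
  rw [deriv_softThreshold,
    ((hasDerivAt_one_add_inv_mul_expNegInvGlue _).comp_sub_const t 1).deriv]
  rcases le_total (t - 1) 0 with ht | ht
  · rw [expNegInvGlue.zero_of_nonpos ht, mul_zero]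
  · exact mul_nonneg (by positivity) (expNegInvGlue.nonneg _)

theorem expNegInvGlue_of_pos {y : ℝ} (hy : 0 < y) : expNegInvGlue y = exp (-y⁻¹) := by
  simp [expNegInvGlue, hy.not_ge]

theorem softThreshold_nonneg (t : ℝ) : 0 ≤ softThreshold t := by
  rcases le_total t 1 with ht | ht
  · exact (softThreshold_of_le_one ht).ge
  · exact mul_nonneg (sub_nonneg.2 ht) (expNegInvGlue.nonneg _)

theorem softThreshold_le (ht : 0 ≤ t) : softThreshold t ≤ t := by
  rcases le_or_gt t 1 with h | h
  · rwa [softThreshold_of_le_one h]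
  · rw [softThreshold, expNegInvGlue_of_pos (sub_pos.2 h)]
    have hexp := exp_le_one_iff.2 (neg_nonpos.2 (inv_nonneg.2 (sub_pos.2 h).le))
    nlinarith

theorem deriv_softThreshold_nonneg (t : ℝ) : 0 ≤ deriv softThreshold t := by
  rw [deriv_softThreshold]
  rcases le_total (t - 1) 0 with ht | ht
  · simp [expNegInvGlue.zero_of_nonpos ht]
  · exact mul_nonneg (by positivity) (expNegInvGlue.nonneg _)

theorem deriv_softThreshold_le_one (t : ℝ) : deriv softThreshold t ≤ 1 := by
  rw [deriv_softThreshold]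
  rcases le_or_gt (t - 1) 0 with ht | ht
  · simp [expNegInvGlue.zero_of_nonpos ht]
  · simp only [expNegInvGlue_of_pos ht]
    calc (1 + (t - 1)⁻¹) * exp (-(t - 1)⁻¹) ≤ exp (t - 1)⁻¹ * exp (-(t - 1)⁻¹) := by
          gcongr
          linarith [add_one_le_exp (t - 1)⁻¹]
      _ = 1 := by rw [← exp_add, add_neg_cancel, exp_zero]

theorem tendsto_expNegInvGlue_atTop : Tendsto expNegInvGlue atTop (𝓝 1) := by
  have h : Tendsto (fun y : ℝ => exp (-y⁻¹)) atTop (𝓝 1) := by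
    simpa [Function.comp_def] using (continuous_exp.tendsto _).comp tendsto_inv_atTop_zero.neg
  refine h.congr' ?_
  filter_upwards [eventually_gt_atTop 0] with y hy using (expNegInvGlue_of_pos hy).symm

theorem tendsto_deriv_softThreshold_atTop : Tendsto (deriv softThreshold) atTop (𝓝 1) := by
  have hsub : Tendsto (fun t : ℝ => t - 1) atTop atTop :=
    tendsto_atTop_add_const_right _ _ tendsto_id
  rw [deriv_softThreshold]
  simpa using (tendsto_const_nhds.add (tendsto_inv_atTop_zero.comp hsub)).mul
    (tendsto_expNegInvGlue_atTop.comp hsub)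

theorem tendsto_softThreshold_div_atTop : Tendsto (fun t => softThreshold t / t) atTop (𝓝 1) := by
  have hsub : Tendsto (fun t : ℝ => t - 1) atTop atTop :=
    tendsto_atTop_add_const_right _ _ tendsto_id
  have h : Tendsto (fun t : ℝ => (1 - t⁻¹) * expNegInvGlue (t - 1)) atTop (𝓝 1) := by
    simpa using (tendsto_const_nhds.sub tendsto_inv_atTop_zero).mul
      (tendsto_expNegInvGlue_atTop.comp hsub)
  refine h.congr' ?_
  filter_upwards [eventually_gt_atTop 0] with t ht
  rw [softThreshold]
  field_simp

variable {c s : ℝ}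

theorem softThreshold_mul_div_le (hc : 0 < c) (hs : 0 ≤ s) : softThreshold (c * s) / c ≤ s :=
  (div_le_iff₀' hc).2 (softThreshold_le (mul_nonneg hc.le hs))

theorem abs_mul_softThreshold_sub_le (hc : 0 < c) (hs : 0 ≤ s) (μ m : ℝ) :
    |μ * (softThreshold (c * s) / c) - m * (s * deriv softThreshold (c * s))| ≤
      (|μ| + |m|) * s := by
  have hT0 : 0 ≤ softThreshold (c * s) / c := div_nonneg (softThreshold_nonneg _) hc.le
  calc |μ * (softThreshold (c * s) / c) - m * (s * deriv softThreshold (c * s))|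
      ≤ |μ * (softThreshold (c * s) / c)| + |m * (s * deriv softThreshold (c * s))| := abs_sub _ _
    _ = |μ| * (softThreshold (c * s) / c) + |m| * (s * deriv softThreshold (c * s)) := by
        rw [abs_mul, abs_mul, abs_of_nonneg hT0,
          abs_of_nonneg (mul_nonneg hs (deriv_softThreshold_nonneg _))]
    _ ≤ |μ| * s + |m| * (s * 1) := by
        gcongr
        · exact softThreshold_mul_div_le hc hs
        · exact deriv_softThreshold_le_one _
    _ = (|μ| + |m|) * s := by ring

theorem tendsto_softThreshold_mul_div (hs : 0 < s) :
    Tendsto (fun n : ℕ => softThreshold (n * s) / n) atTop (𝓝 s) := by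
  have h := (tendsto_softThreshold_div_atTop.comp
    (tendsto_natCast_atTop_atTop.atTop_mul_const hs)).mul_const s
  rw [one_mul] at h
  refine h.congr fun n => ?_
  simp only [Function.comp_apply]
  field_simp

end SoftThreshold

section Indicator

theorem tsupport_indicator_subset {X M : Type*} [TopologicalSpace X] [Zero M] {D K : Set X}
    {g : X → M} (hK : IsClosed K) (hg : ∀ x ∈ D \ K, g x = 0) :
    tsupport (D.indicator g) ⊆ K := by
  refine closure_minimal (fun x hx => ?_) hK
  obtain ⟨hxD, hgx⟩ := indicator_apply_ne_zero.1 hx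
  exact by_contra fun hxK => hgx (hg x ⟨hxD, hxK⟩)

theorem contDiff_indicator {E F : Type*} [NormedAddCommGroup E] [NormedSpace ℝ E]
    [NormedAddCommGroup F] [NormedSpace ℝ F] {D K : Set E} {g : E → F} {n : WithTop ℕ∞}
    (hD : IsOpen D) (hK : IsClosed K) (hKD : K ⊆ D)
    (hgD : ContDiffOn ℝ n g D) (hg : ∀ x ∈ D \ K, g x = 0) : ContDiff ℝ n (D.indicator g) := by
  refine contDiff_iff_contDiffAt.2 fun x => ?_
  by_cases hx : x ∈ K
  · have hxD := hD.mem_nhds (hKD hx)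
    exact (hgD.contDiffAt hxD).congr_of_eventuallyEq
      (eventually_of_mem hxD fun _ hy => indicator_of_mem hy g)
  · have hxt : x ∉ tsupport (D.indicator g) := fun h => hx (tsupport_indicator_subset hK hg h)
    exact contDiffAt_const.congr_of_eventuallyEq (notMem_tsupport_iff_eventuallyEq.1 hxt)

theorem laplacian_indicator {E F : Type*} [NormedAddCommGroup E] [InnerProductSpace ℝ E]
    [FiniteDimensional ℝ E] [NormedAddCommGroup F] [NormedSpace ℝ F] {D : Set E} {g : E → F} {x : E}
    (hD : IsOpen D) (hx : x ∈ D) : Δ (D.indicator g) x = Δ g x :=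
  (laplacian_congr_nhds (eventually_of_mem (hD.mem_nhds hx)
    fun _ hy => indicator_of_mem hy g)).eq_of_nhds

end Indicator

section Comparison

theorem isCompact_inter_le_of_eq_zero_on_frontier {X : Type*} [PseudoMetricSpace X] [ProperSpace X]
    {D : Set X} {W : X → ℝ} (hDb : Bornology.IsBounded D) (hW : ContinuousOn W (closure D))
    (hW0 : ∀ x ∈ frontier D, W x = 0) {c : ℝ} (hc : 0 < c) :
    IsCompact (D ∩ {x | c ≤ W x}) := by
  have hclosed : D ∩ {x | c ≤ W x} = closure D ∩ W ⁻¹' Ici c := by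
    refine Subset.antisymm (inter_subset_inter_left _ subset_closure) fun x hx => ⟨?_, hx.2⟩
    by_contra hxD
    have hxf : x ∈ frontier D := ⟨hx.1, fun h => hxD (interior_subset h)⟩
    exact (hc.trans_le hx.2).ne' (hW0 x hxf)
  rw [hclosed]
  exact hDb.isCompact_closure.of_isClosed_subset
    (hW.preimage_isClosed_of_isClosed isClosed_closure isClosed_Ici) inter_subset_left

theorem tendsto_integral_softThreshold {X : Type*} [MeasurableSpace X] {ν : Measure X}
    {V W : X → ℝ} (hV : AEStronglyMeasurable V ν) (hW : AEStronglyMeasurable W ν)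
    (hWpos : ∀ᵐ x ∂ν, 0 < W x) (hint : Integrable (fun x => V x * W x ^ 2) ν) (μ m : ℝ) :
    Tendsto (fun n : ℕ => ∫ x, V x * (softThreshold (n * W x) / n) *
        (μ * (softThreshold (n * W x) / n) - m * (W x * deriv softThreshold (n * W x))) ∂ν)
      atTop (𝓝 (∫ x, (μ - m) * (V x * W x ^ 2) ∂ν)) := by
  have hF : Continuous softThreshold := contDiff_softThreshold.continuous (n := 0)
  have hF' : Continuous (deriv softThreshold) :=
    (contDiff_softThreshold (n := 1)).continuous_deriv_one
  refine tendsto_integral_filter_of_dominated_convergence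
    (fun x => (|μ| + |m|) * ‖V x * W x ^ 2‖) (.of_forall fun n => ?_) ?_
    (hint.norm.const_mul _) ?_
  · have hT := (hF.comp_aestronglyMeasurable (hW.const_mul (n : ℝ))).mul_const (n : ℝ)⁻¹
    have hT' := hF'.comp_aestronglyMeasurable (hW.const_mul (n : ℝ))
    exact (hV.mul hT).mul ((hT.const_mul μ).sub ((hW.mul hT').const_mul m))
  · filter_upwards [eventually_gt_atTop 0] with n hn
    filter_upwards [hWpos] with x hx
    have hn' : (0 : ℝ) < n := Nat.cast_pos.2 hn
    calc _ ≤ ‖V x‖ * W x * ((|μ| + |m|) * W x) := by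
          rw [norm_mul, norm_mul, norm_of_nonneg (div_nonneg (softThreshold_nonneg _) hn'.le)]
          exact mul_le_mul (mul_le_mul_of_nonneg_left (softThreshold_mul_div_le hn' hx.le)
            (norm_nonneg _)) (abs_mul_softThreshold_sub_le hn' hx.le μ m) (norm_nonneg _)
            (by positivity)
      _ = (|μ| + |m|) * ‖V x * W x ^ 2‖ := by
          rw [norm_mul, norm_of_nonneg (sq_nonneg (W x))]
          ring
  · filter_upwards [hWpos] with x hx
    have hT := tendsto_softThreshold_mul_div hx
    have hT' := tendsto_deriv_softThreshold_atTop.comp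
      (tendsto_natCast_atTop_atTop.atTop_mul_const hx)
    rw [show (μ - m) * (V x * W x ^ 2) = V x * W x * (μ * W x - m * (W x * 1)) by ring]
    exact (hT.const_mul (V x)).mul ((hT.const_mul μ).sub ((hT'.const_mul (W x)).const_mul m))

variable {E : Type*} [NormedAddCommGroup E] [InnerProductSpace ℝ E] [FiniteDimensional ℝ E]
  {D : Set E} {u V W : E → ℝ} {μ m : ℝ}

theorem deriv_mul_laplacian_le_laplacian_softThreshold {x : E} (hW : ContDiffAt ℝ 2 W x) :
    deriv softThreshold (W x) * Δ W x ≤ Δ (fun y => softThreshold (W y)) x := by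
  rw [laplacian_comp (contDiff_softThreshold (n := 2)).contDiffAt hW]
  exact le_add_of_nonneg_left (mul_nonneg (deriv_deriv_softThreshold_nonneg _) (sq_nonneg _))

theorem softThreshold_mul_le_of_supersolution_of_subsolution {x : E} (hu0 : 0 < u x)
    (hsuper : Δ u x ≤ -μ * V x * u x) (hW : ContDiffAt ℝ 2 W x) (hsub : -m * V x * W x ≤ Δ W x) :
    softThreshold (W x) *
        (V x * (μ * softThreshold (W x) - m * (W x * deriv softThreshold (W x)))) ≤
      softThreshold (W x) ^ 2 * (-(Δ u x / u x)) +
        softThreshold (W x) * Δ (fun y => softThreshold (W y)) x := by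
  have hΔu : μ * V x ≤ -(Δ u x / u x) := by
    rw [← neg_div, le_div_iff₀ hu0]
    linarith
  have hΔw : deriv softThreshold (W x) * (-m * V x * W x) ≤ Δ (fun y => softThreshold (W y)) x :=
    (mul_le_mul_of_nonneg_left hsub (deriv_softThreshold_nonneg _)).trans
      (deriv_mul_laplacian_le_laplacian_softThreshold hW)
  linarith [mul_le_mul_of_nonneg_left hΔw (softThreshold_nonneg (W x)),
    mul_le_mul_of_nonneg_left hΔu (sq_nonneg (softThreshold (W x)))]

variable [MeasurableSpace E] [BorelSpace E]

theorem setIntegral_softThreshold_nonpos (hD : IsOpen D) (hV : ContinuousOn V D)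
    (hu : ContDiffOn ℝ 2 u D) (hu0 : ∀ x ∈ D, 0 < u x) (hsuper : ∀ x ∈ D, Δ u x ≤ -μ * V x * u x)
    (hW : ContDiffOn ℝ 2 W D) (hK : IsCompact (D ∩ {x | 1 ≤ W x}))
    (hsub : ∀ x ∈ D, -m * V x * W x ≤ Δ W x) :
    ∫ x in D, V x * softThreshold (W x) *
      (μ * softThreshold (W x) - m * (W x * deriv softThreshold (W x))) ≤ 0 := by
  set K := D ∩ {x | 1 ≤ W x}
  set w := D.indicator fun x => softThreshold (W x) with hw_def
  have hzero : ∀ x ∈ D \ K, softThreshold (W x) = 0 := fun x hx =>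
    softThreshold_of_le_one (le_of_not_ge fun h => hx.2 ⟨hx.1, h⟩)
  have hwK : tsupport w ⊆ K := tsupport_indicator_subset hK.isClosed hzero
  have hwD : tsupport w ⊆ D := hwK.trans inter_subset_left
  have hwc : HasCompactSupport w := hK.of_isClosed_subset (isClosed_tsupport w) hwK
  have hw : ContDiff ℝ 2 w := contDiff_indicator hD hK.isClosed inter_subset_left
    ((contDiff_softThreshold (n := 2)).comp_contDiffOn hW) hzero
  have hF' : Continuous (deriv softThreshold) :=
    (contDiff_softThreshold (n := 1)).continuous_deriv_one
  have hlower : ContinuousOn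
      (fun x => V x * (μ * w x - m * (W x * deriv softThreshold (W x)))) D :=
    hV.mul ((hw.continuous.continuousOn.const_mul μ).sub
      ((hW.continuousOn.mul (hF'.comp_continuousOn hW.continuousOn)).const_mul m))
  obtain ⟨hint, hnonpos⟩ := integral_sq_mul_neg_laplacian_div_add_nonpos hD hu hu0 hw hwc hwD
  calc ∫ x in D, V x * softThreshold (W x) *
        (μ * softThreshold (W x) - m * (W x * deriv softThreshold (W x)))
      = ∫ x, w x * (V x * (μ * w x - m * (W x * deriv softThreshold (W x)))) := by
        rw [← integral_indicator hD.measurableSet]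
        congr with x
        by_cases hx : x ∈ D
        · simp only [hw_def, indicator_of_mem hx]
          ring
        · simp [hw_def, hx]
    _ ≤ ∫ x, (w x ^ 2 * (-(Δ u x / u x)) + w x * Δ w x) := by
        refine integral_mono (integrable_mul_of_continuousOn_tsupport hw.continuous hwc
          (hlower.mono hwD)) hint fun x => ?_
        by_cases hx : x ∈ D
        · simp only [hw_def, indicator_of_mem hx, laplacian_indicator hD hx]
          exact softThreshold_mul_le_of_supersolution_of_subsolution (hu0 x hx) (hsuper x hx)
            (hW.contDiffAt (hD.mem_nhds hx)) (hsub x hx)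
        · simp [hw_def, hx]
    _ ≤ 0 := hnonpos

theorem setIntegral_softThreshold_mul_nonpos (hD : IsOpen D) (hDb : Bornology.IsBounded D)
    (hV : ContinuousOn V D) (hu : ContDiffOn ℝ 2 u D) (hu0 : ∀ x ∈ D, 0 < u x)
    (hsuper : ∀ x ∈ D, Δ u x ≤ -μ * V x * u x) (hW : ContDiffOn ℝ 2 W D)
    (hWc : ContinuousOn W (closure D)) (hW0 : ∀ x ∈ frontier D, W x = 0)
    (hsub : ∀ x ∈ D, -m * V x * W x ≤ Δ W x) {c : ℝ} (hc : 0 < c) :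
    ∫ x in D, V x * (softThreshold (c * W x) / c) *
      (μ * (softThreshold (c * W x) / c) - m * (W x * deriv softThreshold (c * W x))) ≤ 0 := by
  have hcompact : IsCompact (D ∩ {x | 1 ≤ c * W x}) :=
    isCompact_inter_le_of_eq_zero_on_frontier hDb (hWc.const_mul c)
      (fun x hx => by rw [hW0 x hx, mul_zero]) one_pos
  have hsub_c : ∀ x ∈ D, -m * V x * (c * W x) ≤ Δ (fun y => c * W y) x := fun x hx => by
    have hlap : Δ (fun y => c * W y) x = c * Δ W x :=
      laplacian_smul c (hW.contDiffAt (hD.mem_nhds hx))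
    rw [hlap]
    linarith [mul_le_mul_of_nonneg_left (hsub x hx) hc.le]
  calc _ = (c ^ 2)⁻¹ * ∫ x in D, V x * softThreshold (c * W x) *
        (μ * softThreshold (c * W x) - m * (c * W x * deriv softThreshold (c * W x))) := by
        rw [← integral_const_mul]
        congr with x
        field_simp
    _ ≤ 0 := mul_nonpos_of_nonneg_of_nonpos (by positivity)
        (setIntegral_softThreshold_nonpos hD hV hu hu0 hsuper (contDiffOn_const.mul hW)
          hcompact hsub_c)

theorem le_of_supersolution_of_subsolution (hD : IsOpen D) (hDb : Bornology.IsBounded D)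
    (hDn : D.Nonempty) (hV : ContinuousOn V (closure D)) (hV0 : ∀ x ∈ D, 0 < V x)
    (hu : ContDiffOn ℝ 2 u D) (hu0 : ∀ x ∈ D, 0 < u x) (hsuper : ∀ x ∈ D, Δ u x ≤ -μ * V x * u x)
    (hW : ContDiffOn ℝ 2 W D) (hWc : ContinuousOn W (closure D)) (hWpos : ∀ x ∈ D, 0 < W x)
    (hW0 : ∀ x ∈ frontier D, W x = 0) (hsub : ∀ x ∈ D, -m * V x * W x ≤ Δ W x) :
    μ ≤ m := by
  have hVW : ∀ x ∈ D, 0 < V x * W x ^ 2 := fun x hx => mul_pos (hV0 x hx) (pow_pos (hWpos x hx) 2)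
  have hint : IntegrableOn (fun x => V x * W x ^ 2) D :=
    ((hV.mul (hWc.pow 2)).integrableOn_compact hDb.isCompact_closure).mono_set subset_closure
  have hsupp : D ⊆ Function.support fun x => V x * W x ^ 2 := fun x hx => (hVW x hx).ne'
  have hpos : 0 < ∫ x in D, V x * W x ^ 2 := by
    rw [setIntegral_pos_iff_support_of_nonneg_ae
      (ae_restrict_of_forall_mem hD.measurableSet fun x hx => (hVW x hx).le) hint,
      inter_eq_right.2 hsupp]
    exact hD.measure_pos volume hDn
  have hlim := tendsto_integral_softThreshold
    ((hV.mono subset_closure).aestronglyMeasurable hD.measurableSet)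
    (hW.continuousOn.aestronglyMeasurable hD.measurableSet)
    (ae_restrict_of_forall_mem hD.measurableSet hWpos) hint μ m
  have hle : (μ - m) * ∫ x in D, V x * W x ^ 2 ≤ 0 := by
    rw [← integral_const_mul]
    refine le_of_tendsto hlim ?_
    filter_upwards [eventually_gt_atTop 0] with n hn
    exact setIntegral_softThreshold_mul_nonpos hD hDb (hV.mono subset_closure) hu hu0 hsuper hW
      hWc hW0 hsub (Nat.cast_pos.2 hn)
  exact sub_nonpos.1 (nonpos_of_mul_nonpos_left hle hpos)

end Comparison


section LogNorm

theorem log_norm_eq_half_log_norm_sq {E : Type*} [Norm E] (x : E) :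
    log ‖x‖ = 2⁻¹ * log (‖x‖ ^ 2) := by
  rw [log_pow, Nat.cast_ofNat, inv_mul_cancel_left₀ two_ne_zero]

theorem deriv_half_log : deriv (fun s : ℝ => 2⁻¹ * log s) = fun s => 2⁻¹ * s⁻¹ := by
  ext s
  rw [deriv_const_mul_field, deriv_log]

variable {E : Type*} [NormedAddCommGroup E] [InnerProductSpace ℝ E] {f : E → ℝ} {x : E}

theorem contDiffAt_log_norm {n : WithTop ℕ∞} (hx : x ≠ 0) :
    ContDiffAt ℝ n (fun y : E => log ‖y‖) x :=
  (contDiffAt_norm ℝ hx).log (norm_ne_zero_iff.2 hx)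

theorem gradient_norm_sq [CompleteSpace E] (x : E) : ∇ (fun y : E => ‖y‖ ^ 2) x = (2 : ℝ) • x :=
  ext_inner_right ℝ fun v => by
    rw [inner_gradient_left, (hasStrictFDerivAt_norm_sq x).hasFDerivAt.fderiv]
    simp [real_inner_smul_left]

theorem gradient_log_norm [CompleteSpace E] (hx : x ≠ 0) :
    ∇ (fun y : E => log ‖y‖) x = (‖x‖ ^ 2)⁻¹ • x := by
  have hx2 : ‖x‖ ^ 2 ≠ 0 := pow_ne_zero 2 (norm_ne_zero_iff.2 hx)
  simp only [log_norm_eq_half_log_norm_sq]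
  rw [gradient_comp (F := fun s => 2⁻¹ * log s) (f := fun y => ‖y‖ ^ 2)
    ((differentiableAt_log hx2).const_mul _)
    (hasStrictFDerivAt_norm_sq x).hasFDerivAt.differentiableAt, deriv_half_log, gradient_norm_sq,
    smul_smul, mul_right_comm, inv_mul_cancel₀ two_ne_zero, one_mul]

theorem inner_gradient_eq_zero_of_homogeneous [CompleteSpace E] (hf : DifferentiableAt ℝ f x)
    (hhom : ∀ t : ℝ, 0 < t → f (t • x) = f x) : ⟪x, ∇ f x⟫_ℝ = 0 := by
  have hray : HasDerivAt (fun t : ℝ => t • x) x 1 := by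
    simpa using (hasDerivAt_id (1 : ℝ)).smul_const x
  have hcomp : HasDerivAt (fun t : ℝ => f (t • x)) (fderiv ℝ f x x) 1 :=
    hf.hasFDerivAt.comp_hasDerivAt_of_eq 1 hray (one_smul ℝ x).symm
  have hconst : (fun t : ℝ => f (t • x)) =ᶠ[𝓝 1] fun _ => f x :=
    eventually_of_mem (Ioi_mem_nhds one_pos) hhom
  rw [real_inner_comm, inner_gradient_left]
  exact hcomp.unique ((hasDerivAt_const 1 (f x)).congr_of_eventuallyEq hconst)

variable [FiniteDimensional ℝ E]

theorem laplacian_norm_sq (x : E) :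
    Δ (fun y : E => ‖y‖ ^ 2) x = 2 * Module.finrank ℝ E := by
  let b := stdOrthonormalBasis ℝ E
  have hfderiv : (fderiv ℝ fun y : E => ‖y‖ ^ 2) = ⇑(2 • innerSL ℝ : E →L[ℝ] E →L[ℝ] ℝ) :=
    funext fun y => (hasStrictFDerivAt_norm_sq y).hasFDerivAt.fderiv
  have hb : ∀ i, (2 • innerSL ℝ : E →L[ℝ] E →L[ℝ] ℝ) (b i) (b i) = 2 := fun i => by
    change 2 • ⟪b i, b i⟫_ℝ = 2
    simp
  simp only [laplacian_eq_sum_fderiv_fderiv b, hfderiv, ContinuousLinearMap.fderiv, hb]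
  simp [mul_comm]

theorem laplacian_log_norm (hx : x ≠ 0) :
    Δ (fun y : E => log ‖y‖) x = (Module.finrank ℝ E - 2) * (‖x‖ ^ 2)⁻¹ := by
  have hxn : ‖x‖ ≠ 0 := norm_ne_zero_iff.2 hx
  simp only [log_norm_eq_half_log_norm_sq]
  rw [laplacian_comp (F := fun s => 2⁻¹ * log s) (f := fun y => ‖y‖ ^ 2)
    (contDiffAt_const.mul (contDiffAt_log.2 (pow_ne_zero 2 hxn))) (contDiff_norm_sq ℝ).contDiffAt,
    gradient_norm_sq, laplacian_norm_sq, deriv_half_log, deriv_const_mul_field, deriv_inv,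
    norm_smul, norm_two]
  field_simp
  ring

theorem laplacian_comp_log_norm_mul {F : ℝ → ℝ} (hx : x ≠ 0) (hF : ContDiffAt ℝ 2 F (log ‖x‖))
    (hf : ContDiffAt ℝ 2 f x) (hhom : ∀ t : ℝ, 0 < t → f (t • x) = f x) :
    Δ (fun y => F (log ‖y‖) * f y) x = F (log ‖x‖) * Δ f x + (‖x‖ ^ 2)⁻¹ *
      (deriv (deriv F) (log ‖x‖) + (Module.finrank ℝ E - 2) * deriv F (log ‖x‖)) * f x := by
  have hlog := contDiffAt_log_norm (n := 2) hx
  have hxn : ‖x‖ ≠ 0 := norm_ne_zero_iff.2 hx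
  rw [laplacian_mul (f := fun y => F (log ‖y‖)) (hF.comp x hlog) hf,
    laplacian_comp (f := fun y => log ‖y‖) hF hlog, gradient_comp (f := fun y => log ‖y‖)
      (hF.differentiableAt two_ne_zero) (hlog.differentiableAt two_ne_zero),
    laplacian_log_norm hx, gradient_log_norm hx, smul_smul, real_inner_smul_left,
    inner_gradient_eq_zero_of_homogeneous (hf.differentiableAt two_ne_zero) hhom, norm_smul,
    norm_inv, norm_pow, norm_norm]
  field_simp
  ring

end LogNorm

section HardyProfile

/-- The oscillating solution `e^{-at} sin (κ (t - l))` of the Euler equation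
`g'' + 2ag' + (κ² + a²)g = 0` in the logarithmic variable `t = log |x|`; with `a = (N - 2) / 2` it
is the radial part of a solution of the Hardy equation on the shell `l < log |x| < l + π / κ`. -/
def hardyProfile (a κ l t : ℝ) : ℝ := exp (-a * t) * sin (κ * (t - l))

variable {a κ l t : ℝ}

theorem contDiff_hardyProfile {n : WithTop ℕ∞} : ContDiff ℝ n (hardyProfile a κ l) := by
  unfold hardyProfile
  fun_prop

theorem deriv_hardyProfile : deriv (hardyProfile a κ l) =
    fun t => exp (-a * t) * (κ * cos (κ * (t - l)) - a * sin (κ * (t - l))) := by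
  ext t
  have hexp := ((hasDerivAt_id t).const_mul (-a)).exp
  have hsin := (((hasDerivAt_id t).sub_const l).const_mul κ).sin
  refine ((hexp.mul hsin).congr_deriv ?_).deriv
  simp only [id]
  ring

theorem deriv_deriv_hardyProfile_add :
    deriv (deriv (hardyProfile a κ l)) t + 2 * a * deriv (hardyProfile a κ l) t =
      -(κ ^ 2 + a ^ 2) * hardyProfile a κ l t := by
  have hexp := ((hasDerivAt_id t).const_mul (-a)).exp
  have hsin := (((hasDerivAt_id t).sub_const l).const_mul κ).sin
  have hcos := (((hasDerivAt_id t).sub_const l).const_mul κ).cos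
  have hderiv2 := (hexp.mul ((hcos.const_mul κ).sub (hsin.const_mul a))).deriv
  simp only [id] at hderiv2
  rw [deriv_hardyProfile]
  refine (congrArg (· + _) hderiv2).trans ?_
  unfold hardyProfile
  simp
  ring

theorem hardyProfile_pos (hκ : 0 < κ) (ht : t ∈ Ioo l (l + π / κ)) : 0 < hardyProfile a κ l t := by
  have hlt : κ * (t - l) < π := (lt_div_iff₀' hκ).1 (sub_lt_iff_lt_add'.2 ht.2)
  exact mul_pos (exp_pos _) (sin_pos_of_pos_of_lt_pi (mul_pos hκ (sub_pos.2 ht.1)) hlt)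

theorem hardyProfile_left : hardyProfile a κ l l = 0 := by simp [hardyProfile]

theorem hardyProfile_right (hκ : κ ≠ 0) : hardyProfile a κ l (l + π / κ) = 0 := by
  simp [hardyProfile, mul_div_cancel₀ _ hκ]

end HardyProfile

section Cone

variable {N : ℕ} {Ω : Set (Euc N)} {r R : ℝ} {x : Euc N}

theorem lap_eq_laplacian (u : Euc N → ℝ) : lap N u = Δ u := by
  ext x
  simp only [lap, laplacian_eq_iteratedFDeriv_orthonormalBasis u (EuclideanSpace.basisFun _ ℝ),
    EuclideanSpace.basisFun_apply]

theorem continuousOn_inv_norm_smul {E : Type*} [NormedAddCommGroup E] [NormedSpace ℝ E] :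
    ContinuousOn (fun x : E => ‖x‖⁻¹ • x) {0}ᶜ :=
  (continuous_norm.continuousOn.inv₀ fun _ hx => norm_ne_zero_iff.2 hx).smul continuousOn_id

theorem isOpen_cone (hΩ : IsOpen {ω : Metric.sphere (0 : Euc N) 1 | (ω : Euc N) ∈ Ω}) :
    IsOpen (cone N Ω) := by
  obtain ⟨U, hU, hUΩ⟩ := isOpen_induced_iff.1 hΩ
  have hcone : cone N Ω = {0}ᶜ ∩ (fun x => ‖x‖⁻¹ • x) ⁻¹' U := by
    ext x
    refine and_congr_right fun hx => ?_
    have hmem : ‖x‖⁻¹ • x ∈ Metric.sphere (0 : Euc N) 1 := by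
      simp [norm_smul, inv_mul_cancel₀ (norm_ne_zero_iff.2 hx)]
    exact (Set.ext_iff.1 hUΩ ⟨_, hmem⟩).symm
  rw [hcone]
  exact continuousOn_inv_norm_smul.isOpen_inter_preimage isOpen_compl_singleton hU

theorem coneGT_subset_cone (hr : 0 ≤ r) : coneGT N r Ω ⊆ cone N Ω :=
  fun _ hx => ⟨norm_pos_iff.1 (hr.trans_lt hx.1), hx.2⟩

theorem isOpen_coneGT (hΩ : IsOpen {ω : Metric.sphere (0 : Euc N) 1 | (ω : Euc N) ∈ Ω})
    (hr : 0 ≤ r) : IsOpen (coneGT N r Ω) := by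
  have hcone : coneGT N r Ω = {x | r < ‖x‖} ∩ cone N Ω :=
    Subset.antisymm (fun x hx => ⟨hx.1, coneGT_subset_cone hr hx⟩) fun x hx => ⟨hx.1, hx.2.2⟩
  rw [hcone]
  exact (isOpen_lt continuous_const continuous_norm).inter (isOpen_cone hΩ)

/-- The part `r < |x| < R` of the open cone over `Ω`. -/
def coneShell (N : ℕ) (r R : ℝ) (Ω : Set (Euc N)) : Set (Euc N) :=
  coneGT N r Ω ∩ Metric.ball 0 R

theorem isOpen_coneShell (hΩ : IsOpen {ω : Metric.sphere (0 : Euc N) 1 | (ω : Euc N) ∈ Ω})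
    (hr : 0 ≤ r) : IsOpen (coneShell N r R Ω) :=
  (isOpen_coneGT hΩ hr).inter Metric.isOpen_ball

theorem coneShell_nonempty (hΩ : Ω ⊆ Metric.sphere 0 1) (hne : Ω.Nonempty) (hr : 0 ≤ r)
    (hrR : r < R) : (coneShell N r R Ω).Nonempty := by
  obtain ⟨ω, hω⟩ := hne
  obtain ⟨s, hrs, hsR⟩ := exists_between hrR
  have hs : 0 < s := hr.trans_lt hrs
  have hnorm : ‖s • ω‖ = s := by
    rw [norm_smul, mem_sphere_zero_iff_norm.1 (hΩ hω), mul_one, norm_of_nonneg hs.le]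
  refine ⟨s • ω, ⟨hrs.trans_eq hnorm.symm, ?_⟩, mem_ball_zero_iff.2 (hnorm.trans_lt hsR)⟩
  rwa [hnorm, inv_smul_smul₀ hs.ne']

theorem norm_mem_Icc_of_mem_closure_coneShell (hx : x ∈ closure (coneShell N r R Ω)) :
    ‖x‖ ∈ Icc r R :=
  closure_minimal (t := norm ⁻¹' Icc r R)
    (fun _ hy => ⟨hy.1.1.le, (mem_ball_zero_iff.1 hy.2).le⟩)
    (isClosed_Icc.preimage continuous_norm) hx

theorem inv_norm_smul_mem_closure_of_mem_closure_coneShell (hr : 0 < r)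
    (hx : x ∈ closure (coneShell N r R Ω)) : ‖x‖⁻¹ • x ∈ closure Ω := by
  have hx0 : x ≠ 0 :=
    norm_pos_iff.1 (hr.trans_le (norm_mem_Icc_of_mem_closure_coneShell hx).1)
  have hcont : ContinuousAt (fun y : Euc N => ‖y‖⁻¹ • y) x :=
    continuousOn_inv_norm_smul.continuousAt (isOpen_compl_singleton.mem_nhds hx0)
  exact hcont.continuousWithinAt.mem_closure hx fun _ hy => hy.1.2

end Cone

section HardyBarrier

/-- The function `|x|^{-(N-2)/2} sin (κ (log |x| - l)) φ(x / |x|)`, which solves the Hardy equation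
with constant `C_{H,Ω} + κ²` when `φ` is a Dirichlet eigenfunction, and vanishes on the boundary of
the shell `e^l < |x| < e^{l + π / κ}` of the cone over `Ω`. -/
def hardyBarrier (N : ℕ) (φ : Euc N → ℝ) (κ l : ℝ) (x : Euc N) : ℝ :=
  hardyProfile (((N : ℝ) - 2) / 2) κ l (log ‖x‖) * φ (‖x‖⁻¹ • x)

variable {N : ℕ} {Ω : Set (Euc N)} {φ : Euc N → ℝ} {lam1 κ l : ℝ} {x : Euc N}

theorem log_norm_mem_Ioo_of_mem_coneShell {h : ℝ} (hx : x ∈ coneShell N (exp l) (exp h) Ω) :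
    log ‖x‖ ∈ Ioo l h := by
  have hpos : 0 < ‖x‖ := (exp_pos l).trans hx.1.1
  exact ⟨(lt_log_iff_exp_lt hpos).2 hx.1.1, (log_lt_iff_lt_exp hpos).2 (mem_ball_zero_iff.1 hx.2)⟩

theorem hardyBarrier_pos (hκ : 0 < κ) (hφ : ∀ ω ∈ Ω, 0 < φ ω)
    (hx : x ∈ coneShell N (exp l) (exp (l + π / κ)) Ω) : 0 < hardyBarrier N φ κ l x :=
  mul_pos (hardyProfile_pos hκ (log_norm_mem_Ioo_of_mem_coneShell hx)) (hφ _ hx.1.2)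

theorem contDiffAt_hardyBarrier (hx : x ≠ 0)
    (hφ : ContDiffAt ℝ 2 (fun y : Euc N => φ (‖y‖⁻¹ • y)) x) :
    ContDiffAt ℝ 2 (hardyBarrier N φ κ l) x :=
  (contDiff_hardyProfile.contDiffAt.comp x (contDiffAt_log_norm hx)).mul hφ

theorem laplacian_hardyBarrier (hx : x ≠ 0)
    (hφ : ContDiffAt ℝ 2 (fun y : Euc N => φ (‖y‖⁻¹ • y)) x) :
    Δ (hardyBarrier N φ κ l) x =
      hardyProfile (((N : ℝ) - 2) / 2) κ l (log ‖x‖) * Δ (fun y => φ (‖y‖⁻¹ • y)) x -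
        (κ ^ 2 + (((N : ℝ) - 2) / 2) ^ 2) * ‖x‖ ^ (-(2 : ℝ)) * hardyBarrier N φ κ l x := by
  have hhom : ∀ t : ℝ, 0 < t → φ (‖t • x‖⁻¹ • t • x) = φ (‖x‖⁻¹ • x) := fun t ht => by
    rw [norm_smul, norm_of_nonneg ht.le, mul_inv_rev, mul_smul, inv_smul_smul₀ ht.ne']
  have hode := deriv_deriv_hardyProfile_add (a := ((N : ℝ) - 2) / 2) (κ := κ) (l := l)
    (t := log ‖x‖)
  rw [mul_div_cancel₀ _ two_ne_zero] at hode
  unfold hardyBarrier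
  rw [laplacian_comp_log_norm_mul hx contDiff_hardyProfile.contDiffAt hφ hhom,
    finrank_euclideanSpace_fin, hode, rpow_neg (norm_nonneg x), rpow_two]
  ring

theorem continuousOn_hardyBarrier {r R : ℝ} (hr : 0 < r) (hφ : ContinuousOn φ (closure Ω)) :
    ContinuousOn (hardyBarrier N φ κ l) (closure (coneShell N r R Ω)) := by
  have hne : closure (coneShell N r R Ω) ⊆ {0}ᶜ := fun x hx =>
    norm_pos_iff.1 (hr.trans_le (norm_mem_Icc_of_mem_closure_coneShell hx).1)
  have hlog : ContinuousOn (fun x : Euc N => log ‖x‖) (closure (coneShell N r R Ω)) := fun x hx =>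
    (contDiffAt_log_norm (n := 0) (hne hx)).continuousAt.continuousWithinAt
  exact ((contDiff_hardyProfile (n := 0)).continuous.comp_continuousOn hlog).mul
    (hφ.comp (continuousOn_inv_norm_smul.mono hne)
      fun x hx => inv_norm_smul_mem_closure_of_mem_closure_coneShell hr hx)

theorem hardyBarrier_eq_zero_of_mem_frontier (hκ : κ ≠ 0)
    (hΩ : IsOpen {ω : Metric.sphere (0 : Euc N) 1 | (ω : Euc N) ∈ Ω})
    (hφ : ∀ ω ∈ closure Ω \ Ω, φ ω = 0)
    (hx : x ∈ frontier (coneShell N (exp l) (exp (l + π / κ)) Ω)) :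
    hardyBarrier N φ κ l x = 0 := by
  rw [(isOpen_coneShell hΩ (exp_pos l).le).frontier_eq] at hx
  obtain ⟨hnl, hnr⟩ := norm_mem_Icc_of_mem_closure_coneShell hx.1
  rcases hnl.eq_or_lt with hleft | hleft
  · rw [hardyBarrier, ← hleft, log_exp, hardyProfile_left, zero_mul]
  rcases hnr.eq_or_lt with hright | hright
  · rw [hardyBarrier, hright, log_exp, hardyProfile_right hκ, zero_mul]
  have hω : ‖x‖⁻¹ • x ∈ closure Ω \ Ω :=
    ⟨inv_norm_smul_mem_closure_of_mem_closure_coneShell (exp_pos l) hx.1,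
      fun hmem => hx.2 ⟨⟨hleft, hmem⟩, mem_ball_zero_iff.2 hright⟩⟩
  rw [hardyBarrier, hφ _ hω, mul_zero]

theorem neg_mul_hardyBarrier_le_laplacian (hκ : 0 < κ)
    (hsmooth : ContDiffAt ℝ 2 (fun y : Euc N => φ (‖y‖⁻¹ • y)) x)
    (hsub : -lam1 * ‖x‖ ^ (-(2 : ℝ)) * φ (‖x‖⁻¹ • x) ≤ Δ (fun y => φ (‖y‖⁻¹ • y)) x)
    (hx : x ∈ coneShell N (exp l) (exp (l + π / κ)) Ω) :
    -(κ ^ 2 + CHconst N lam1) * ‖x‖ ^ (-(2 : ℝ)) * hardyBarrier N φ κ l x ≤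
      Δ (hardyBarrier N φ κ l) x := by
  have hprofile := hardyProfile_pos (a := ((N : ℝ) - 2) / 2) hκ
    (log_norm_mem_Ioo_of_mem_coneShell hx)
  rw [laplacian_hardyBarrier (coneGT_subset_cone (exp_pos l).le hx.1).1 hsmooth]
  unfold hardyBarrier CHconst
  linarith [mul_le_mul_of_nonneg_left hsub hprofile.le]

end HardyBarrier

theorem mu_le_hardy_of_positive_supersolution_general {N : ℕ} {Ω : Set (Euc N)}
    (hΩ : Ω ⊆ Metric.sphere 0 1) (hne : Ω.Nonempty)
    (hopen : IsOpen {ω : Metric.sphere (0 : Euc N) 1 | (ω : Euc N) ∈ Ω}) {lam1 : ℝ}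
    {φ : Euc N → ℝ} (hφ : ContinuousOn φ (closure Ω)) (hφpos : ∀ ω ∈ Ω, 0 < φ ω)
    (hφ0 : ∀ ω ∈ closure Ω \ Ω, φ ω = 0)
    (hsmooth : ContDiffOn ℝ 2 (fun x => φ (‖x‖⁻¹ • x)) (cone N Ω))
    (hsub : ∀ x ∈ cone N Ω,
      -lam1 * ‖x‖ ^ (-(2 : ℝ)) * φ (‖x‖⁻¹ • x) ≤ lap N (fun y => φ (‖y‖⁻¹ • y)) x)
    {ρ μ : ℝ} {u : Euc N → ℝ} (hu : ContDiffOn ℝ 2 u (coneGT N ρ Ω))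
    (hupos : ∀ x ∈ coneGT N ρ Ω, 0 < u x)
    (hsuper : ∀ x ∈ coneGT N ρ Ω, 0 ≤ -lap N u x - μ * ‖x‖ ^ (-(2 : ℝ)) * u x) :
    μ ≤ CHconst N lam1 := by
  simp only [lap_eq_laplacian] at hsub hsuper
  by_contra! hlt
  obtain ⟨κ, hκ, hκμ⟩ : ∃ κ : ℝ, 0 < κ ∧ κ ^ 2 + CHconst N lam1 < μ := by
    obtain ⟨c, hc, hcμ⟩ := exists_between (sub_pos.2 hlt)
    exact ⟨√c, sqrt_pos.2 hc, by rwa [sq_sqrt hc.le, ← lt_sub_iff_add_lt]⟩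
  let D := coneShell N (exp ρ) (exp (ρ + π / κ)) Ω
  have hDρ : D ⊆ coneGT N ρ Ω := fun x hx =>
    ⟨((lt_add_one ρ).trans_le (add_one_le_exp ρ)).trans hx.1.1, hx.1.2⟩
  have hDcone : D ⊆ cone N Ω := fun x hx => coneGT_subset_cone (exp_pos ρ).le hx.1
  have hΦ : ∀ x ∈ D, ContDiffAt ℝ 2 (fun y : Euc N => φ (‖y‖⁻¹ • y)) x := fun x hx =>
    hsmooth.contDiffAt ((isOpen_cone hopen).mem_nhds (hDcone hx))
  have hnorm : ∀ x ∈ closure D, 0 < ‖x‖ := fun x hx =>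
    (exp_pos ρ).trans_le (norm_mem_Icc_of_mem_closure_coneShell hx).1
  refine hκμ.not_ge (le_of_supersolution_of_subsolution (V := fun x => ‖x‖ ^ (-(2 : ℝ)))
    (isOpen_coneShell hopen (exp_pos ρ).le) (Metric.isBounded_ball.subset inter_subset_right)
    (coneShell_nonempty hΩ hne (exp_pos ρ).le
      (exp_lt_exp.2 (lt_add_of_pos_right ρ (div_pos pi_pos hκ))))
    (continuous_norm.continuousOn.rpow_const fun x hx => .inl (hnorm x hx).ne')
    (fun x hx => rpow_pos_of_pos (hnorm x (subset_closure hx)) _) (hu.mono hDρ)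
    (fun x hx => hupos x (hDρ hx)) (fun x hx => by linarith [hsuper x (hDρ hx)])
    (fun x hx => (contDiffAt_hardyBarrier (hDcone hx).1 (hΦ x hx)).contDiffWithinAt)
    (continuousOn_hardyBarrier (exp_pos ρ) hφ) (fun x hx => hardyBarrier_pos hκ hφpos hx)
    (fun x hx => hardyBarrier_eq_zero_of_mem_frontier hκ.ne' hopen hφ0 hx)
    fun x hx => neg_mul_hardyBarrier_le_laplacian hκ (hΦ x hx) (hsub x (hDcone hx)) hx)

/-- Lemma 2.1: if `-Δ - μ|x|⁻²` admits a positive `C²` supersolution on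
`C_Ω^ρ`, then `μ ≤ C_{H,Ω}`. -/
theorem mu_le_hardy_of_positive_supersolution
    (N : ℕ) (hN : 2 ≤ N) (Ω : Set (Euc N)) (hΩ : IsConeDomain N Ω)
    (lam1 : ℝ) (φ : Euc N → ℝ) (hphi : DirichletEigenpair N Ω lam1 φ)
    (ρ μ : ℝ) (hρ : 0 < ρ)
    (h : ∃ u : Euc N → ℝ, ContDiffOn ℝ 2 u (coneGT N ρ Ω) ∧
      (∀ x ∈ coneGT N ρ Ω, 0 < u x) ∧
      (∀ x ∈ coneGT N ρ Ω, 0 ≤ -lap N u x - μ * ‖x‖ ^ (-(2:ℝ)) * u x)) :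
    μ ≤ CHconst N lam1 := by
  obtain ⟨u, hu, hupos, hsuper⟩ := h
  exact mu_le_hardy_of_positive_supersolution_general hΩ.1 hΩ.2.1.nonempty hΩ.2.2 hphi.contOn
    hphi.pos hphi.bdryZero hphi.smoothExt (fun x hx => (hphi.eigen x hx).ge) hu hupos hsuper
end
end

section
/- Let ρ > 0 and 0 ≤ α < N. If f : C_Ω^ρ → ℝ is measurable, locally integrable on C_Ω^ρ, and f(y) > 0 for all y ∈ C_Ω^ρ, then there exists a constant C > 0 such that ∫_{C_Ω^ρ} f(y)|x−y|^{−α} dy ≥ C·|x|^{−α} for all x ∈ C_Ω^{2ρ} (the left-hand side being interpreted in [0,∞]). -/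
open MeasureTheory Real Set
open scoped ENNReal NNReal

noncomputable section

/-!
Let `ρ < r < R`. If `‖y‖ < r` and `R ≤ ‖x‖`, then `‖x - y‖` lies between `(1 - r / R) * ‖x‖` and
`(1 + r / R) * ‖x‖`, so the kernel `‖x - y‖ ^ (-α)` is at least a constant multiple of
`‖x‖ ^ (-α)`. It remains to integrate over the part of the cone inside the ball of radius `r`: this
is a nonempty open set, so the positive function `f` has positive mass there.
-/

open scoped Pointwise

section KernelBound

variable {E : Type*} [SeminormedAddCommGroup E] {x y : E} {r R κ : ℝ}

theorem min_rpow_le_rpow_of_mem_Icc {a b t : ℝ} (ha : 0 < a) (ht : t ∈ Icc a b) (β : ℝ) :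
    min (a ^ β) (b ^ β) ≤ t ^ β := by
  rcases le_total 0 β with hβ | hβ
  · exact min_le_of_left_le (rpow_le_rpow ha.le ht.1 hβ)
  · exact min_le_of_right_le (rpow_le_rpow_of_nonpos (ha.trans_le ht.1) ht.2 hβ)

theorem norm_sub_mem_Icc (hy : ‖y‖ ≤ κ * ‖x‖) :
    ‖x - y‖ ∈ Icc ((1 - κ) * ‖x‖) ((1 + κ) * ‖x‖) := by
  constructor
  · linarith [norm_sub_norm_le x y]
  · linarith [norm_sub_le x y]

theorem min_rpow_mul_norm_rpow_le_norm_sub_rpow (hκ : κ ∈ Ico 0 1) (hx : 0 < ‖x‖)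
    (hy : ‖y‖ ≤ κ * ‖x‖) (β : ℝ) :
    min ((1 - κ) ^ β) ((1 + κ) ^ β) * ‖x‖ ^ β ≤ ‖x - y‖ ^ β := by
  have hκ₀ : 0 < 1 - κ := sub_pos.2 hκ.2
  have hκ₁ : 0 ≤ 1 + κ := add_nonneg zero_le_one hκ.1
  calc
    min ((1 - κ) ^ β) ((1 + κ) ^ β) * ‖x‖ ^ β
        = min (((1 - κ) * ‖x‖) ^ β) (((1 + κ) * ‖x‖) ^ β) := by
      rw [mul_rpow hκ₀.le hx.le, mul_rpow hκ₁ hx.le, min_mul_of_nonneg _ _ (by positivity)]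
    _ ≤ ‖x - y‖ ^ β := min_rpow_le_rpow_of_mem_Icc (mul_pos hκ₀ hx) (norm_sub_mem_Icc hy) β

theorem exists_pos_forall_mul_norm_rpow_le_norm_sub_rpow (hr : 0 ≤ r) (hrR : r < R) (β : ℝ) :
    ∃ c > 0, ∀ x y : E, R ≤ ‖x‖ → ‖y‖ ≤ r → c * ‖x‖ ^ β ≤ ‖x - y‖ ^ β := by
  have hR : 0 < R := hr.trans_lt hrR
  have hκ : r / R ∈ Ico 0 1 := ⟨by positivity, (div_lt_one hR).2 hrR⟩
  have hκ₀ : 0 < 1 - r / R := sub_pos.2 hκ.2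
  refine ⟨min ((1 - r / R) ^ β) ((1 + r / R) ^ β), by positivity, fun x y hx hy => ?_⟩
  refine min_rpow_mul_norm_rpow_le_norm_sub_rpow hκ (hR.trans_le hx) ?_ β
  calc
    ‖y‖ ≤ r / R * R := by rwa [div_mul_cancel₀ r hR.ne']
    _ ≤ r / R * ‖x‖ := mul_le_mul_of_nonneg_left hx hκ.1

end KernelBound

section Integral

theorem lintegral_ofReal_pos {X : Type*} [MeasurableSpace X] {μ : Measure X} {f : X → ℝ}
    (hf : AEMeasurable f μ) (hpos : ∀ᵐ x ∂μ, 0 < f x) (hμ : μ ≠ 0) :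
    0 < ∫⁻ x, ENNReal.ofReal (f x) ∂μ := by
  refine pos_iff_ne_zero.2 fun hzero => hμ (ae_eq_bot.1 (Filter.eventually_false_iff_eq_bot.1 ?_))
  filter_upwards [(lintegral_eq_zero_iff' hf.ennreal_ofReal).1 hzero, hpos] with x hx hxpos
  exact (ENNReal.ofReal_pos.2 hxpos).ne' hx

variable {E : Type*} [SeminormedAddCommGroup E] [MeasurableSpace E] {μ : Measure E} {f : E → ℝ}

theorem exists_pos_forall_ofReal_le_lintegral_mul_norm_sub_rpow [OpensMeasurableSpace E]
    {r R : ℝ} (hrR : r < R) (hf : AEMeasurable f μ) (hpos : ∀ᵐ y ∂μ, 0 < f y)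
    (hμ : μ (Metric.ball 0 r) ≠ 0) (β : ℝ) :
    ∃ C > 0, ∀ x, R ≤ ‖x‖ →
      ENNReal.ofReal (C * ‖x‖ ^ β) ≤ ∫⁻ y, ENNReal.ofReal (f y * ‖x - y‖ ^ β) ∂μ := by
  have hr : 0 < r := Metric.nonempty_ball.1 (nonempty_of_measure_ne_zero hμ)
  obtain ⟨c, hc, hkernel⟩ :=
    exists_pos_forall_mul_norm_rpow_le_norm_sub_rpow (E := E) hr.le hrR β
  set ν := μ.restrict (Metric.ball 0 r)
  have hmass : 0 < ∫⁻ y, ENNReal.ofReal (f y) ∂ν :=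
    lintegral_ofReal_pos hf.restrict (ae_restrict_of_ae hpos) (Measure.restrict_eq_zero.not.2 hμ)
  obtain ⟨m, -, hm, hm_lt⟩ := ENNReal.lt_iff_exists_real_btwn.1 hmass
  rw [ENNReal.ofReal_pos] at hm
  refine ⟨c * m, mul_pos hc hm, fun x hx => ?_⟩
  calc
    ENNReal.ofReal (c * m * ‖x‖ ^ β)
        = ENNReal.ofReal (c * ‖x‖ ^ β) * ENNReal.ofReal m := by
      rw [← ENNReal.ofReal_mul (by positivity), mul_right_comm]
    _ ≤ ENNReal.ofReal (c * ‖x‖ ^ β) * ∫⁻ y, ENNReal.ofReal (f y) ∂ν := by gcongr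
    _ ≤ ∫⁻ y, ENNReal.ofReal (c * ‖x‖ ^ β) * ENNReal.ofReal (f y) ∂ν :=
      lintegral_const_mul_le _ _
    _ ≤ ∫⁻ y, ENNReal.ofReal (f y * ‖x - y‖ ^ β) ∂ν := by
      refine lintegral_mono_ae ?_
      filter_upwards [ae_restrict_mem measurableSet_ball] with y hy
      rw [mul_comm, ENNReal.ofReal_mul' (rpow_nonneg (norm_nonneg (x - y)) β)]
      gcongr
      exact hkernel x y hx (mem_ball_zero_iff.1 hy).le
    _ ≤ ∫⁻ y, ENNReal.ofReal (f y * ‖x - y‖ ^ β) ∂μ := setLIntegral_le_lintegral _ _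

end Integral

section Cone

variable {N : ℕ} {ρ : ℝ} {Ω : Set (Euc N)}

theorem coneGT_eq_Ioi_smul (hρ : 0 ≤ ρ) (hΩ : Ω ⊆ Metric.sphere 0 1) :
    coneGT N ρ Ω = Ioi ρ • Ω := by
  ext x
  constructor
  · rintro ⟨hx, hxΩ⟩
    exact ⟨‖x‖, hx, ‖x‖⁻¹ • x, hxΩ, smul_inv_smul₀ (hρ.trans_lt hx).ne' x⟩
  · rintro ⟨t, ht, ω, hω, rfl⟩
    have ht₀ : 0 < t := hρ.trans_lt ht
    have hnorm : ‖t • ω‖ = t := by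
      rw [norm_smul, mem_sphere_zero_iff_norm.1 (hΩ hω), mul_one, norm_of_nonneg ht₀.le]
    change ρ < ‖t • ω‖ ∧ ‖t • ω‖⁻¹ • t • ω ∈ Ω
    rw [hnorm, inv_smul_smul₀ ht₀.ne']
    exact ⟨ht, hω⟩

theorem isOpen_coneGT_s11 (hρ : 0 ≤ ρ) (hΩ : Ω ⊆ Metric.sphere 0 1)
    (hopen : IsOpen ((↑) ⁻¹' Ω : Set (Metric.sphere (0 : Euc N) 1))) :
    IsOpen (coneGT N ρ Ω) := by
  have hsmul := isOpen_Ioi.smul_sphere one_ne_zero (notMem_Ioi.2 hρ) hopen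
  rwa [Subtype.image_preimage_coe, inter_eq_right.2 hΩ, ← coneGT_eq_Ioi_smul hρ hΩ] at hsmul

theorem coneGT_inter_ball_nonempty {r : ℝ} (hρ : 0 ≤ ρ) (hρr : ρ < r)
    (hΩ : Ω ⊆ Metric.sphere 0 1) (hne : Ω.Nonempty) :
    (coneGT N ρ Ω ∩ Metric.ball 0 r).Nonempty := by
  obtain ⟨ω, hω⟩ := hne
  obtain ⟨t, hρt, htr⟩ := exists_between hρr
  refine ⟨t • ω, ?_, ?_⟩
  · rw [coneGT_eq_Ioi_smul hρ hΩ]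
    exact smul_mem_smul hρt hω
  · rwa [mem_ball_zero_iff, norm_smul, mem_sphere_zero_iff_norm.1 (hΩ hω), mul_one,
      norm_of_nonneg (hρ.trans hρt.le)]

theorem conv_lower_bound_of_pos_general {R : ℝ} (hρ : 0 ≤ ρ) (hρR : ρ < R)
    (hΩ : Ω ⊆ Metric.sphere 0 1) (hne : Ω.Nonempty)
    (hopen : IsOpen ((↑) ⁻¹' Ω : Set (Metric.sphere (0 : Euc N) 1))) (α : ℝ)
    {f : Euc N → ℝ} (hf : AEMeasurable f (volume.restrict (coneGT N ρ Ω)))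
    (hpos : ∀ y ∈ coneGT N ρ Ω, 0 < f y) :
    ∃ C > 0, ∀ x, R ≤ ‖x‖ → ENNReal.ofReal (C * ‖x‖ ^ (-α)) ≤ rieszConv N α ρ Ω f x := by
  have hcone : IsOpen (coneGT N ρ Ω) := isOpen_coneGT_s11 hρ hΩ hopen
  obtain ⟨r, hρr, hrR⟩ := exists_between hρR
  have hball : volume.restrict (coneGT N ρ Ω) (Metric.ball 0 r) ≠ 0 := by
    rw [Measure.restrict_apply measurableSet_ball, inter_comm]
    exact (hcone.inter Metric.isOpen_ball).measure_ne_zero volume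
      (coneGT_inter_ball_nonempty hρ hρr hΩ hne)
  exact exists_pos_forall_ofReal_le_lintegral_mul_norm_sub_rpow hrR hf
    (ae_restrict_of_forall_mem hcone.measurableSet hpos) hball (-α)

end Cone

/-- Lemma 2.2(i): a positive locally integrable `f` on `C_Ω^ρ` satisfies
`(|x|^{-α} * f)(x) ≥ C|x|^{-α}` on `C_Ω^{2ρ}`. -/
theorem conv_lower_bound_of_pos
    (N : ℕ) (hN : 2 ≤ N) (Ω : Set (Euc N)) (hΩ : IsConeDomain N Ω)
    (ρ α : ℝ) (hρ : 0 < ρ) (hα : 0 ≤ α) (hαN : α < N)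
    (f : Euc N → ℝ) (hmeas : Measurable f)
    (hloc : LocallyIntegrableOn f (coneGT N ρ Ω))
    (hfpos : ∀ y ∈ coneGT N ρ Ω, 0 < f y) :
    ∃ C > 0, ∀ x ∈ coneGT N (2 * ρ) Ω,
      ENNReal.ofReal (C * ‖x‖ ^ (-α)) ≤
        ∫⁻ y in coneGT N ρ Ω, ENNReal.ofReal (f y * ‖x - y‖ ^ (-α)) := by
  obtain ⟨C, hC, hbound⟩ := conv_lower_bound_of_pos_general hρ.le (by linarith : ρ < 2 * ρ)
    hΩ.1 hΩ.2.1.nonempty hΩ.2.2 α hmeas.aemeasurable hfpos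
  exact ⟨C, hC, fun x hx => hbound x hx.1.le⟩
end
end

section
/- Let ρ > 0 and 0 ≤ α < N. Let f : C_Ω^ρ → [0, ∞) be measurable and suppose there exist a subdomain Ω₀ of Ω with closure(Ω₀) ⊆ Ω, and constants c, β > 0 such that f(x) ≥ c·|x|^{−β} for all x ∈ C_{Ω₀}^ρ. If N ≥ α + β, then ∫_{C_Ω^ρ} f(y)|x−y|^{−α} dy = +∞ for every x ∈ C_Ω^{2ρ}. -/
open MeasureTheory Real Set
open scoped ENNReal NNReal

noncomputable section

/-!
In polar coordinates `|y|^s dy` becomes `σ ⊗ r^(N-1+s) dr`, with `σ` the surface measure, so over a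
truncated cone of positive solid angle its integral diverges as soon as `N + s ≥ 0`. Away from
`x`, i.e. for `|y| ≥ 2|x|`, one has `|y|/2 ≤ |x - y| ≤ 2|y|`, so the kernel `|x - y|^(-α)` is
comparable to `|y|^(-α)`, and the integrand dominates a multiple of `|y|^(-α-β)`: apply the
divergence with `s = -α-β ≥ -N`.
-/

theorem rpow_neg_abs_mul_rpow_le_rpow {a b C : ℝ} (ha : 0 < a) (hC : 0 < C) (hab : a ≤ C * b)
    (hba : b ≤ C * a) (t : ℝ) : C ^ (-|t|) * a ^ t ≤ b ^ t := by
  have hb : 0 < b := pos_of_mul_pos_right (ha.trans_le hab) hC.le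
  rcases le_total 0 t with ht | ht
  · rw [abs_of_nonneg ht, rpow_neg hC.le, ← inv_rpow hC.le,
      ← mul_rpow (inv_nonneg.2 hC.le) ha.le]
    exact rpow_le_rpow (by positivity) ((inv_mul_le_iff₀ hC).2 hab) ht
  · rw [abs_of_nonpos ht, neg_neg, ← mul_rpow hC.le ha.le]
    exact rpow_le_rpow_of_nonpos hb hba ht

theorem two_rpow_neg_abs_mul_norm_rpow_le_norm_sub_rpow {E : Type*} [SeminormedAddCommGroup E]
    {x y : E} (hy : 0 < ‖y‖) (hxy : 2 * ‖x‖ ≤ ‖y‖) (t : ℝ) :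
    2 ^ (-|t|) * ‖y‖ ^ t ≤ ‖x - y‖ ^ t := by
  refine rpow_neg_abs_mul_rpow_le_rpow hy two_pos ?_ ?_ t
  · linarith [norm_sub_norm_le y x, norm_sub_rev x y]
  · linarith [norm_sub_le x y]

theorem lintegral_Ioi_rpow_eq_top {s t : ℝ} (ht : 0 < t) (hs : -1 ≤ s) :
    ∫⁻ r in Ioi t, ENNReal.ofReal (r ^ s) = ⊤ := by
  have hnonneg : 0 ≤ᵐ[volume.restrict (Ioi t)] fun r ↦ r ^ s :=
    (ae_restrict_mem measurableSet_Ioi).mono fun r hr ↦ rpow_nonneg (ht.trans hr).le s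
  by_contra hfin
  have hint : IntegrableOn (fun r ↦ r ^ s) (Ioi t) :=
    ⟨by fun_prop, (hasFiniteIntegral_iff_ofReal hnonneg).2 (lt_top_iff_ne_top.2 hfin)⟩
  exact hs.not_gt ((integrableOn_Ioi_rpow_iff ht).1 hint)

theorem setLIntegral_volumeIoiPow (n : ℕ) (g : ℝ → ℝ≥0∞) {s : Set ℝ} (hs : MeasurableSet s) :
    ∫⁻ r in ((↑) : Ioi (0 : ℝ) → ℝ) ⁻¹' s, g r ∂Measure.volumeIoiPow n =
      ∫⁻ r in Ioi 0 ∩ s, ENNReal.ofReal (r ^ n) * g r := by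
  rw [Measure.volumeIoiPow, setLIntegral_withDensity_eq_setLIntegral_mul_non_measurable _
    (by fun_prop) _ (measurable_subtype_coe hs) (.of_forall fun _ ↦ ENNReal.ofReal_lt_top)]
  simp only [Pi.mul_apply]
  rw [setLIntegral_subtype measurableSet_Ioi _ fun r : ℝ ↦ ENNReal.ofReal (r ^ n) * g r,
    Subtype.image_preimage_coe]

section TruncatedCone

variable {E : Type*} [NormedAddCommGroup E] [NormedSpace ℝ E]

/-- The cone over `Ω` with the closed ball of radius `R` removed, in an arbitrary normed space;
`coneGT N` is the case `E = ℝ^N`. -/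
def truncatedCone (R : ℝ) (Ω : Set E) : Set E :=
  {y | R < ‖y‖ ∧ ‖y‖⁻¹ • y ∈ Ω}

theorem truncatedCone_subset_truncatedCone {R R' : ℝ} {Ω Ω' : Set E} (hR : R' ≤ R) (hΩ : Ω ⊆ Ω') :
    truncatedCone R Ω ⊆ truncatedCone R' Ω' :=
  fun _ hy ↦ ⟨hR.trans_lt hy.1, hΩ hy.2⟩

variable [MeasurableSpace E] [BorelSpace E]

theorem measurableSet_truncatedCone [SecondCountableTopology E] {Ω : Set E} (hΩ : MeasurableSet Ω)
    (R : ℝ) : MeasurableSet (truncatedCone R Ω) :=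
  (measurableSet_lt measurable_const measurable_norm).inter
    ((measurable_norm.inv.smul measurable_id) hΩ)

variable [FiniteDimensional ℝ E] (μ : Measure E) [μ.IsAddHaarMeasure]

theorem setLIntegral_truncatedCone_fun_norm {R : ℝ} (hR : 0 ≤ R) (Ω : Set E) {g : ℝ → ℝ≥0∞}
    (hg : Measurable g) :
    ∫⁻ y in truncatedCone R Ω, g ‖y‖ ∂μ =
      μ.toSphere ((↑) ⁻¹' Ω) *
        ∫⁻ r in Ioi R, ENNReal.ofReal (r ^ (Module.finrank ℝ E - 1)) * g r := by
  have h_ne_zero : truncatedCone R Ω ⊆ {0}ᶜ := fun y hy ↦ norm_pos_iff.1 (hR.trans_lt hy.1)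
  have h_prod : homeomorphUnitSphereProd E ⁻¹' (((↑) ⁻¹' Ω) ×ˢ ((↑) ⁻¹' Ioi R)) =
      ((↑) : ({0}ᶜ : Set E) → E) ⁻¹' truncatedCone R Ω := by
    ext y
    simp [truncatedCone, and_comm]
  calc ∫⁻ y in truncatedCone R Ω, g ‖y‖ ∂μ
      = ∫⁻ y in ((↑) : ({0}ᶜ : Set E) → E) ⁻¹' truncatedCone R Ω, g ‖(y : E)‖ ∂μ.comap (↑) := by
        rw [setLIntegral_subtype (measurableSet_singleton 0).compl _ fun y : E ↦ g ‖y‖,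
          Subtype.image_preimage_coe, inter_eq_right.2 h_ne_zero]
    _ = ∫⁻ p in ((↑) ⁻¹' Ω) ×ˢ ((↑) ⁻¹' Ioi R), g p.2
          ∂μ.toSphere.prod (.volumeIoiPow (Module.finrank ℝ E - 1)) := by
        rw [← μ.measurePreserving_homeomorphUnitSphereProd.setLIntegral_comp_preimage_emb
          (homeomorphUnitSphereProd E).measurableEmbedding, h_prod]
        simp only [homeomorphUnitSphereProd_apply_snd_coe]
    _ = μ.toSphere ((↑) ⁻¹' Ω) *
          ∫⁻ r in (↑) ⁻¹' Ioi R, g r ∂.volumeIoiPow (Module.finrank ℝ E - 1) := by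
        rw [← Measure.prod_restrict]
        simpa using lintegral_prod_mul (μ := μ.toSphere.restrict ((↑) ⁻¹' Ω))
          (f := fun _ ↦ 1) aemeasurable_const (hg.comp measurable_subtype_coe).aemeasurable
    _ = _ := by
        rw [setLIntegral_volumeIoiPow _ _ measurableSet_Ioi, inter_eq_right.2 (Ioi_subset_Ioi hR)]

variable {μ}

theorem setLIntegral_truncatedCone_norm_rpow_eq_top {Ω : Set E}
    (hΩ : μ.toSphere ((↑) ⁻¹' Ω) ≠ 0) {R : ℝ} (hR : 0 < R) {s : ℝ}
    (hs : -(Module.finrank ℝ E : ℝ) ≤ s) :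
    ∫⁻ y in truncatedCone R Ω, ENNReal.ofReal (‖y‖ ^ s) ∂μ = ⊤ := by
  have h_dim : 1 ≤ Module.finrank ℝ E := by
    refine Nat.one_le_iff_ne_zero.2 fun h ↦ hΩ ?_
    simp [μ.toSphere_eq_zero_iff_finrank.2 h]
  have h_jacobian : ∀ r ∈ Ioi R, ENNReal.ofReal (r ^ (Module.finrank ℝ E - 1)) *
      ENNReal.ofReal (r ^ s) = ENNReal.ofReal (r ^ ((Module.finrank ℝ E : ℝ) - 1 + s)) := by
    intro r hr
    have hr0 : 0 < r := hR.trans hr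
    rw [← ENNReal.ofReal_mul (by positivity), rpow_add hr0, ← Nat.cast_pred h_dim, rpow_natCast]
  rw [setLIntegral_truncatedCone_fun_norm μ hR.le Ω (g := fun r ↦ ENNReal.ofReal (r ^ s))
      (by fun_prop), setLIntegral_congr_fun measurableSet_Ioi h_jacobian,
    lintegral_Ioi_rpow_eq_top hR (by linarith), ENNReal.mul_top hΩ]

theorem conv_infinite_of_lower_bound_general {Ω Ω₀ : Set E} (hΩ₀ : MeasurableSet Ω₀)
    (hΩ₀_pos : μ.toSphere ((↑) ⁻¹' Ω₀) ≠ 0) (hsub : Ω₀ ⊆ Ω) {f : E → ℝ≥0∞} {ρ α β c : ℝ}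
    (hc : 0 < c) (hlow : ∀ y ∈ truncatedCone ρ Ω₀, ENNReal.ofReal (c * ‖y‖ ^ (-β)) ≤ f y)
    (hαβ : α + β ≤ Module.finrank ℝ E) (x : E) :
    ∫⁻ y in truncatedCone ρ Ω, f y * ENNReal.ofReal (‖x - y‖ ^ (-α)) ∂μ = ⊤ := by
  set R : ℝ := max (max ρ (2 * ‖x‖)) 1
  have hR : 0 < R := one_pos.trans_le (le_max_right _ _)
  have hρR : ρ ≤ R := (le_max_left _ _).trans (le_max_left _ _)
  have hxR : 2 * ‖x‖ ≤ R := (le_max_right _ _).trans (le_max_left _ _)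
  set K : ℝ := c * 2 ^ (-|-α|)
  have hK : 0 < K := by positivity
  have h_integrand : ∀ y ∈ truncatedCone R Ω₀,
      ENNReal.ofReal K * ENNReal.ofReal (‖y‖ ^ (-β + -α)) ≤
        f y * ENNReal.ofReal (‖x - y‖ ^ (-α)) := by
    intro y hy
    have hy0 : 0 < ‖y‖ := hR.trans hy.1
    have h_kernel := two_rpow_neg_abs_mul_norm_rpow_le_norm_sub_rpow hy0 (hxR.trans hy.1.le) (-α)
    calc ENNReal.ofReal K * ENNReal.ofReal (‖y‖ ^ (-β + -α))
        = ENNReal.ofReal (c * ‖y‖ ^ (-β)) * ENNReal.ofReal (2 ^ (-|-α|) * ‖y‖ ^ (-α)) := by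
          rw [← ENNReal.ofReal_mul hK.le, ← ENNReal.ofReal_mul (by positivity), rpow_add hy0]
          congr 1
          ring
      _ ≤ f y * ENNReal.ofReal (‖x - y‖ ^ (-α)) :=
          mul_le_mul' (hlow y (truncatedCone_subset_truncatedCone hρR Subset.rfl hy))
            (ENNReal.ofReal_le_ofReal h_kernel)
  refine top_unique ?_
  calc ⊤
      = ENNReal.ofReal K * ∫⁻ y in truncatedCone R Ω₀, ENNReal.ofReal (‖y‖ ^ (-β + -α)) ∂μ := by
        rw [setLIntegral_truncatedCone_norm_rpow_eq_top hΩ₀_pos hR (by linarith),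
          ENNReal.mul_top (ENNReal.ofReal_pos.2 hK).ne']
    _ = ∫⁻ y in truncatedCone R Ω₀, ENNReal.ofReal K * ENNReal.ofReal (‖y‖ ^ (-β + -α)) ∂μ :=
        (lintegral_const_mul _ (by fun_prop)).symm
    _ ≤ ∫⁻ y in truncatedCone R Ω₀, f y * ENNReal.ofReal (‖x - y‖ ^ (-α)) ∂μ :=
        setLIntegral_mono' (measurableSet_truncatedCone hΩ₀ R) h_integrand
    _ ≤ ∫⁻ y in truncatedCone ρ Ω, f y * ENNReal.ofReal (‖x - y‖ ^ (-α)) ∂μ :=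
        lintegral_mono_set (truncatedCone_subset_truncatedCone hρR hsub)

end TruncatedCone

namespace IsConeDomain

variable {N : ℕ} {Ω : Set (Euc N)}

theorem measurableSet (hΩ : IsConeDomain N Ω) : MeasurableSet Ω := by
  have h_image : MeasurableSet
      (Subtype.val '' (Subtype.val ⁻¹' Ω : Set (Metric.sphere (0 : Euc N) 1))) :=
    Metric.isClosed_sphere.measurableSet.subtype_image hΩ.2.2.measurableSet
  rwa [Subtype.image_preimage_coe, inter_eq_right.2 hΩ.1] at h_image

theorem toSphere_ne_zero (hΩ : IsConeDomain N Ω) (μ : Measure (Euc N)) [μ.IsOpenPosMeasure] :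
    μ.toSphere ((↑) ⁻¹' Ω) ≠ 0 := by
  obtain ⟨ω, hω⟩ := hΩ.2.1.nonempty
  exact hΩ.2.2.measure_ne_zero _ ⟨⟨ω, hΩ.1 hω⟩, hω⟩

end IsConeDomain

/-- Lemma 2.2(ii), case `N ≥ α + β`: if `f ≥ c|x|^{-β}` on a subcone and
`N ≥ α + β`, then the convolution is infinite on `C_Ω^{2ρ}`. -/
theorem conv_infinite_of_lower_bound
    (N : ℕ) (hN : 2 ≤ N) (Ω : Set (Euc N)) (hΩ : IsConeDomain N Ω)
    (ρ α : ℝ) (hρ : 0 < ρ) (hα : 0 ≤ α) (hαN : α < N)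
    (f : Euc N → ℝ) (hmeas : Measurable f) (hf0 : ∀ y, 0 ≤ f y)
    (Ω₀ : Set (Euc N)) (hΩ₀ : IsConeDomain N Ω₀) (hsub : closure Ω₀ ⊆ Ω)
    (c β : ℝ) (hc : 0 < c) (hβ : 0 < β)
    (hlow : ∀ x ∈ coneGT N ρ Ω₀, c * ‖x‖ ^ (-β) ≤ f x)
    (hNab : α + β ≤ (N : ℝ)) :
    ∀ x ∈ coneGT N (2 * ρ) Ω,
      (∫⁻ y in coneGT N ρ Ω, ENNReal.ofReal (f y * ‖x - y‖ ^ (-α))) = ⊤ := by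
  intro x _
  simp_rw [ENNReal.ofReal_mul (hf0 _)]
  exact conv_infinite_of_lower_bound_general hΩ₀.measurableSet (hΩ₀.toSphere_ne_zero volume)
    (subset_closure.trans hsub) hc (fun y hy ↦ ENNReal.ofReal_le_ofReal (hlow y hy))
    (by simpa using hNab) x
end
end

section
/- Let ρ > 0, 0 ≤ α < N, τ ≥ 0, and β > N − α > 0. Let f : C_Ω^ρ → [0, ∞) be measurable and suppose there exists c > 0 such that f(x) ≤ c·|x|^{−β}·(log(1+|x|))^τ for all x ∈ C_Ω^ρ. Then there exists a constant C > 0 such that for all x ∈ C_Ω^{2ρ}: (a) if β < N then ∫_{C_Ω^ρ} f(y)|x−y|^{−α} dy ≤ C·|x|^{N−α−β}·(log(1+|x|))^τ; (b) if β = N then ∫_{C_Ω^ρ} f(y)|x−y|^{−α} dy ≤ C·|x|^{−α}·(log(1+|x|))^{1+τ}; (c) if β > N then ∫_{C_Ω^ρ} f(y)|x−y|^{−α} dy ≤ C·|x|^{−α}·(log(1+|x|))^τ. -/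
open MeasureTheory Real Set
open scoped ENNReal NNReal

noncomputable section

/-! In dimension `d`, with `w(y) = |y|^{-β} log^τ(1+|y|)`, split `∫_{|y|>ρ} w(y)|x-y|^{-α} dy` at
`|y| = |x|/2` and `|y| = 2|x|`. In the outer region `|x-y|` is comparable to `|y|`, and since
`log^τ` grows more slowly than any power the tail contributes at most `|x|^{d-α-β} log^τ(1+|x|)`. In
the middle region `w(y)` is comparable to `w(x)`, and integrating `|x-y|^{-α}` over a ball around
`x` gives the same bound. In the inner region `|x-y|` is comparable to `|x|`, which leaves `|x|^{-α}
log^τ(1+|x|) ∫_ρ^{|x|} r^{d-β-1} dr`. Altogether the potential is at most a multiple of `|x|^{-α}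
log^τ(1+|x|) (|x|^{d-β} + ∫_ρ^{|x|} r^{d-β-1} dr)`, and the three cases come from the sign of `d -
β`. -/

open Module (finrank)

section RealEstimates

variable {ρ R : ℝ}

lemma rpow_le_rpow_abs_mul_rpow {a t K : ℝ} (p : ℝ) (ha : 0 < a) (ht : 0 < t)
    (hat : a ≤ K * t) (hta : t ≤ K * a) : t ^ p ≤ K ^ |p| * a ^ p := by
  have hK : 0 < K := pos_of_mul_pos_left (ha.trans_le hat) ht.le
  rcases le_total 0 p with hp | hp
  · rw [abs_of_nonneg hp, ← mul_rpow hK.le ha.le]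
    exact rpow_le_rpow ht.le hta hp
  · calc t ^ p ≤ (K⁻¹ * a) ^ p :=
          rpow_le_rpow_of_nonpos (by positivity) ((inv_mul_le_iff₀ hK).2 hat) hp
      _ = K ^ |p| * a ^ p := by
          rw [abs_of_nonpos hp, mul_rpow (by positivity) ha.le, inv_rpow hK.le, rpow_neg hK.le]

lemma log_one_add_mul_le_mul_log_one_add {k r : ℝ} (hk : 1 ≤ k) (hr : 0 ≤ r) :
    log (1 + k * r) ≤ k * log (1 + r) := by
  rw [← log_rpow (by positivity)]
  exact log_le_log (by positivity) (one_add_mul_self_le_rpow_one_add (by linarith) hk)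

lemma log_one_add_mul_le_rpow_mul {ε k : ℝ} (hρ : 0 < ρ) (hε : 0 < ε) (hR : ρ ≤ R) (hk : 1 ≤ k) :
    log (1 + k * R) ≤ (1 + 1 / (ε * log (1 + ρ))) * k ^ ε * log (1 + R) := by
  have hR₀ : 0 < R := hρ.trans_le hR
  have hlogρ : 0 < log (1 + ρ) := log_pos (by linarith)
  have hlogR : log (1 + ρ) ≤ log (1 + R) := log_le_log (by positivity) (by linarith)
  have hsplit : log (1 + k * R) ≤ log k + log (1 + R) := by
    rw [← log_mul (by positivity) (by positivity)]
    exact log_le_log (by positivity) (by linarith)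
  have hlogk : log k ≤ k ^ ε / ε * (log (1 + R) / log (1 + ρ)) :=
    (log_le_rpow_div (by positivity) hε).trans
      (le_mul_of_one_le_right (by positivity) ((one_le_div hlogρ).2 hlogR))
  have hlog : log (1 + R) ≤ k ^ ε * log (1 + R) :=
    le_mul_of_one_le_left (by linarith) (one_le_rpow hk hε.le)
  calc log (1 + k * R) ≤ k ^ ε / ε * (log (1 + R) / log (1 + ρ)) + k ^ ε * log (1 + R) := by
        linarith
    _ = (1 + 1 / (ε * log (1 + ρ))) * k ^ ε * log (1 + R) := by field_simp; ring

lemma exists_log_one_add_rpow_le_mul_rpow {τ η : ℝ} (hρ : 0 < ρ) (hτ : 0 ≤ τ) (hη : 0 < η) :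
    ∃ M > 0, ∀ R ≥ ρ, ∀ r ≥ R, log (1 + r) ^ τ ≤ M * (r / R) ^ η * log (1 + R) ^ τ := by
  have hlogρ : 0 < log (1 + ρ) := log_pos (by linarith)
  set ε := η / (τ + 1)
  have hε : 0 < ε := by positivity
  have hετ : ε * τ ≤ η := by
    rw [div_mul_eq_mul_div, div_le_iff₀ (by positivity)]
    nlinarith
  refine ⟨(1 + 1 / (ε * log (1 + ρ))) ^ τ, by positivity, fun R hR r hr => ?_⟩
  have hR₀ : 0 < R := hρ.trans_le hR
  have hr₀ : 0 < r := hR₀.trans_le hr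
  have hk : 1 ≤ r / R := (one_le_div hR₀).2 hr
  have hlogR : 0 ≤ log (1 + R) := log_nonneg (by linarith)
  have hlogr : 0 ≤ log (1 + r) := log_nonneg (by linarith)
  calc log (1 + r) ^ τ
      ≤ ((1 + 1 / (ε * log (1 + ρ))) * (r / R) ^ ε * log (1 + R)) ^ τ := by
        gcongr
        simpa [div_mul_cancel₀ r hR₀.ne'] using log_one_add_mul_le_rpow_mul hρ hε hR hk
    _ = (1 + 1 / (ε * log (1 + ρ))) ^ τ * (r / R) ^ (ε * τ) * log (1 + R) ^ τ := by
        rw [mul_rpow (by positivity) hlogR, mul_rpow (by positivity) (by positivity),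
          ← rpow_mul (by positivity)]
    _ ≤ (1 + 1 / (ε * log (1 + ρ))) ^ τ * (r / R) ^ η * log (1 + R) ^ τ := by
        gcongr

lemma integral_rpow_sub_one {s : ℝ} (hρ : 0 < ρ) (hR : ρ ≤ R) (hs : s ≠ 0) :
    ∫ r in ρ..R, r ^ (s - 1) = (R ^ s - ρ ^ s) / s := by
  have h₀ : (0 : ℝ) ∉ uIcc ρ R := notMem_uIcc_of_lt hρ (hρ.trans_le hR)
  simpa using integral_rpow (a := ρ) (b := R) (r := s - 1) (.inr ⟨by simpa using hs, h₀⟩)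

lemma rpow_add_integral_rpow_sub_one_le_of_pos {s : ℝ} (hρ : 0 < ρ) (hR : ρ ≤ R) (hs : 0 < s) :
    R ^ s + ∫ r in ρ..R, r ^ (s - 1) ≤ (1 + 1 / s) * R ^ s := by
  have hρs : 0 ≤ ρ ^ s / s := by positivity
  rw [integral_rpow_sub_one hρ hR hs.ne', sub_div, add_mul, one_mul, one_div_mul_eq_div]
  linarith

lemma rpow_add_integral_rpow_sub_one_le_of_neg {s : ℝ} (hρ : 0 < ρ) (hR : ρ ≤ R) (hs : s < 0) :
    R ^ s + ∫ r in ρ..R, r ^ (s - 1) ≤ (1 - 1 / s) * ρ ^ s := by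
  have hRs : R ^ s ≤ ρ ^ s := rpow_le_rpow_of_nonpos hρ hR hs.le
  have hRs' : R ^ s / s ≤ 0 :=
    div_nonpos_of_nonneg_of_nonpos (rpow_nonneg (hρ.le.trans hR) s) hs.le
  rw [integral_rpow_sub_one hρ hR hs.ne, sub_div, sub_mul, one_mul, one_div_mul_eq_div]
  linarith

lemma one_add_integral_inv_le_mul_log (hρ : 0 < ρ) (hR : ρ ≤ R) :
    1 + ∫ r in ρ..R, r⁻¹ ≤ ((1 + |log ρ|) / log (1 + ρ) + 1) * log (1 + R) := by
  have hR₀ : 0 < R := hρ.trans_le hR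
  have hlogρ : 0 < log (1 + ρ) := log_pos (by linarith)
  have hlogR : log (1 + ρ) ≤ log (1 + R) := log_le_log (by positivity) (by linarith)
  have hconst : 1 + |log ρ| ≤ (1 + |log ρ|) / log (1 + ρ) * log (1 + R) := by
    rw [div_mul_eq_mul_div, le_div_iff₀ hlogρ]
    gcongr
  have hlog : log R ≤ log (1 + R) := log_le_log hR₀ (by linarith)
  rw [integral_inv_of_pos hρ hR₀, log_div hR₀.ne' hρ.ne']
  linarith [neg_abs_le (log ρ)]

lemma exists_rpow_add_integral_rpow_sub_one_le (s : ℝ) (hρ : 0 < ρ) :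
    ∃ C > 0, ∀ R ≥ ρ,
      (0 < s → R ^ s + ∫ r in ρ..R, r ^ (s - 1) ≤ C * R ^ s) ∧
      (s = 0 → R ^ s + ∫ r in ρ..R, r ^ (s - 1) ≤ C * log (1 + R)) ∧
      (s < 0 → R ^ s + ∫ r in ρ..R, r ^ (s - 1) ≤ C) := by
  rcases lt_trichotomy s 0 with hs | rfl | hs
  · have hs' : 1 / s < 0 := one_div_neg.2 hs
    exact ⟨(1 - 1 / s) * ρ ^ s, mul_pos (by linarith) (by positivity), fun R hR =>
      ⟨fun h => absurd h hs.not_gt, fun h => absurd h hs.ne,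
        fun _ => rpow_add_integral_rpow_sub_one_le_of_neg hρ hR hs⟩⟩
  · have hlogρ : 0 < log (1 + ρ) := log_pos (by linarith)
    refine ⟨(1 + |log ρ|) / log (1 + ρ) + 1, by positivity, fun R hR =>
      ⟨fun h => absurd h (lt_irrefl 0), fun _ => ?_, fun h => absurd h (lt_irrefl 0)⟩⟩
    simpa [rpow_neg_one] using one_add_integral_inv_le_mul_log hρ hR
  · exact ⟨1 + 1 / s, by positivity, fun R hR =>
      ⟨fun _ => rpow_add_integral_rpow_sub_one_le_of_pos hρ hR hs, fun h => absurd h hs.ne',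
        fun h => absurd h hs.not_gt⟩⟩

end RealEstimates

section LogWeight

/-- The radial weight `r^{-β} log^τ(1+r)`, the profile that dominates the density. -/
def logWeight (β τ r : ℝ) : ℝ := r ^ (-β) * log (1 + r) ^ τ

@[fun_prop]
lemma measurable_logWeight (β τ : ℝ) : Measurable (logWeight β τ) := by
  unfold logWeight
  fun_prop

lemma logWeight_nonneg {r : ℝ} (β τ : ℝ) (hr : 0 ≤ r) : 0 ≤ logWeight β τ r :=
  mul_nonneg (rpow_nonneg hr _) (rpow_nonneg (log_nonneg (by linarith)) _)

lemma logWeight_le_of_mem_Ioc {τ r R : ℝ} (β : ℝ) (hτ : 0 ≤ τ) (hR : 0 < R)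
    (hr : r ∈ Ioc (R / 2) (2 * R)) : logWeight β τ r ≤ 2 ^ |β| * 2 ^ τ * logWeight β τ R := by
  obtain ⟨hRr, hrR⟩ := hr
  have hr₀ : 0 < r := by linarith
  have hpow : r ^ (-β) ≤ 2 ^ |β| * R ^ (-β) := by
    simpa using rpow_le_rpow_abs_mul_rpow (K := 2) (-β) hR hr₀ (by linarith) hrR
  have hlog : log (1 + r) ≤ 2 * log (1 + R) :=
    (log_le_log (by linarith) (by linarith)).trans
      (log_one_add_mul_le_mul_log_one_add one_le_two hR.le)
  have hlogr : 0 ≤ log (1 + r) := log_nonneg (by linarith)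
  have hlogR : 0 ≤ log (1 + R) := log_nonneg (by linarith)
  calc logWeight β τ r ≤ 2 ^ |β| * R ^ (-β) * (2 * log (1 + R)) ^ τ :=
        mul_le_mul hpow (rpow_le_rpow hlogr hlog hτ) (by positivity) (by positivity)
    _ = 2 ^ |β| * 2 ^ τ * logWeight β τ R := by
        rw [logWeight, mul_rpow zero_le_two hlogR]
        ring

end LogWeight

lemma setLIntegral_ofReal_le_mul {X : Type*} [MeasurableSpace X] {ν : Measure X} {s : Set X}
    {F G : X → ℝ} {A : ℝ} (hA : 0 ≤ A) (hG : Measurable G) (hFG : ∀ y ∈ s, F y ≤ A * G y) :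
    ∫⁻ y in s, ENNReal.ofReal (F y) ∂ν ≤ ENNReal.ofReal A * ∫⁻ y in s, ENNReal.ofReal (G y) ∂ν := by
  rw [← lintegral_const_mul _ (by fun_prop)]
  refine setLIntegral_mono (by fun_prop) fun y hy => ?_
  rw [← ENNReal.ofReal_mul hA]
  exact ENNReal.ofReal_le_ofReal (hFG y hy)

section Potential

variable {E : Type*} [SeminormedAddCommGroup E]

lemma norm_sub_rpow_le_of_two_mul_norm_le {x y : E} (p : ℝ) (hy : 0 < ‖y‖)
    (hxy : 2 * ‖x‖ ≤ ‖y‖) : ‖x - y‖ ^ p ≤ 2 ^ |p| * ‖y‖ ^ p := by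
  have hlower : ‖y‖ - ‖x‖ ≤ ‖x - y‖ := norm_sub_rev x y ▸ norm_sub_norm_le y x
  exact rpow_le_rpow_abs_mul_rpow p hy (by linarith) (by linarith)
    (by linarith [norm_sub_le x y])

/-- The Riesz potential `∫_A |y|^{-β} log^τ(1+|y|) |x-y|^{-α} dμ(y)` of the logarithmic weight
restricted to `A`. It is valued in `[0,∞]`, so that it is monotone and subadditive in `A` without
integrability assumptions. -/
def logWeightPotential [MeasurableSpace E] (μ : Measure E) (A : Set E) (α β τ : ℝ) (x : E) :
    ℝ≥0∞ :=
  ∫⁻ y in A, ENNReal.ofReal (logWeight β τ ‖y‖ * ‖x - y‖ ^ (-α)) ∂μ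

lemma logWeightPotential_Ioi_le_add [MeasurableSpace E] (μ : Measure E) {a b : ℝ}
    (α β τ ρ : ℝ) (x : E) (hab : a ≤ b) :
    logWeightPotential μ (norm ⁻¹' Ioi ρ) α β τ x ≤
      logWeightPotential μ (norm ⁻¹' Ioc ρ a) α β τ x +
        (logWeightPotential μ (norm ⁻¹' Ioc a b) α β τ x +
          logWeightPotential μ (norm ⁻¹' Ioi b) α β τ x) := by
  have hcover : (norm ⁻¹' Ioi ρ : Set E) ⊆
      norm ⁻¹' Ioc ρ a ∪ (norm ⁻¹' Ioc a b ∪ norm ⁻¹' Ioi b) := by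
    simp only [← preimage_union, Ioc_union_Ioi_eq_Ioi hab]
    exact preimage_mono Ioi_subset_Ioc_union_Ioi
  exact (lintegral_mono_set hcover).trans <| (lintegral_union_le _ _ _).trans <|
    add_le_add_right (lintegral_union_le _ _ _) _

lemma setLIntegral_mul_le_mul_logWeightPotential [MeasurableSpace E] [OpensMeasurableSpace E]
    (μ : Measure E) {α β τ c : ℝ} {S A : Set E} (hSA : S ⊆ A) (hc : 0 ≤ c) {f : E → ℝ≥0∞}
    (hf : ∀ y ∈ S, f y ≤ ENNReal.ofReal (c * logWeight β τ ‖y‖)) (x : E) :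
    ∫⁻ y in S, f y * ENNReal.ofReal (‖x - y‖ ^ (-α)) ∂μ ≤
      ENNReal.ofReal c * logWeightPotential μ A α β τ x := by
  have hdist : Measurable fun y => ‖x - y‖ := (by fun_prop : Continuous fun y => ‖x - y‖).measurable
  calc ∫⁻ y in S, f y * ENNReal.ofReal (‖x - y‖ ^ (-α)) ∂μ
      ≤ ∫⁻ y in S, ENNReal.ofReal c *
          ENNReal.ofReal (logWeight β τ ‖y‖ * ‖x - y‖ ^ (-α)) ∂μ := by
        refine setLIntegral_mono (by fun_prop) fun y hy => ?_
        rw [ENNReal.ofReal_mul (logWeight_nonneg β τ (norm_nonneg y)), ← mul_assoc,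
          ← ENNReal.ofReal_mul hc]
        gcongr
        exact hf y hy
    _ = ENNReal.ofReal c * logWeightPotential μ S α β τ x :=
        lintegral_const_mul _ (by fun_prop)
    _ ≤ ENNReal.ofReal c * logWeightPotential μ A α β τ x := by
        gcongr
        exact lintegral_mono_set hSA

end Potential

section HaarMeasure

variable {E : Type*} [NormedAddCommGroup E] [NormedSpace ℝ E] [FiniteDimensional ℝ E]
  [Nontrivial E] [MeasurableSpace E] [BorelSpace E] (μ : Measure E) [μ.IsAddHaarMeasure]

lemma toSphere_real_univ_pos : 0 < μ.toSphere.real univ :=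
  have : NeZero μ.toSphere := ⟨μ.toSphere_ne_zero⟩
  measureReal_univ_pos

lemma lintegral_fun_norm_addHaar {g : ℝ → ℝ≥0∞} (hg : Measurable g) :
    ∫⁻ y, g ‖y‖ ∂μ =
      μ.toSphere univ * ∫⁻ r in Ioi (0 : ℝ), ENNReal.ofReal (r ^ (finrank ℝ E - 1)) * g r :=
  calc ∫⁻ y, g ‖y‖ ∂μ = ∫⁻ y : ({0}ᶜ : Set E), g ‖y.1‖ ∂μ.comap (↑) := by
        rw [lintegral_subtype_comap (measurableSet_singleton _).compl fun y => g ‖y‖,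
          restrict_compl_singleton]
    _ = ∫⁻ z, g z.2 ∂μ.toSphere.prod (.volumeIoiPow (finrank ℝ E - 1)) := by
        simpa using μ.measurePreserving_homeomorphUnitSphereProd.lintegral_comp_emb
          (Homeomorph.measurableEmbedding _) (g ∘ Subtype.val ∘ Prod.snd)
    _ = μ.toSphere univ * ∫⁻ r : Ioi (0 : ℝ), g r ∂.volumeIoiPow (finrank ℝ E - 1) := by
        simpa using lintegral_prod_mul (μ := μ.toSphere) (f := fun _ => 1) aemeasurable_const
          (hg.comp measurable_subtype_coe).aemeasurable
    _ = _ := by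
        have hg' : Measurable fun r : Ioi (0 : ℝ) => g r := hg.comp measurable_subtype_coe
        rw [Measure.volumeIoiPow, lintegral_withDensity_eq_lintegral_mul _ (by fun_prop) hg']
        exact congrArg _ (lintegral_subtype_comap measurableSet_Ioi
          fun r => ENNReal.ofReal (r ^ (finrank ℝ E - 1)) * g r)

lemma setLIntegral_preimage_norm_rpow {p : ℝ} {I : Set ℝ} (hI : MeasurableSet I)
    (hint : IntegrableOn (fun r : ℝ => r ^ (p + finrank ℝ E - 1)) (I ∩ Ioi 0)) :
    ∫⁻ y in norm ⁻¹' I, ENNReal.ofReal (‖y‖ ^ p) ∂μ =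
      ENNReal.ofReal (μ.toSphere.real univ * ∫ r in I ∩ Ioi 0, r ^ (p + finrank ℝ E - 1)) := by
  have hjac : EqOn
      (fun r => ENNReal.ofReal (r ^ (finrank ℝ E - 1)) *
        I.indicator (fun r => ENNReal.ofReal (r ^ p)) r)
      (I.indicator fun r => ENNReal.ofReal (r ^ (p + finrank ℝ E - 1))) (Ioi 0) := by
    intro r (hr : 0 < r)
    by_cases hrI : r ∈ I
    · simp only [indicator_of_mem hrI]
      rw [← ENNReal.ofReal_mul (by positivity), ← rpow_natCast, ← rpow_add hr,
        Nat.cast_pred Module.finrank_pos]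
      ring_nf
    · simp [hrI]
  calc ∫⁻ y in norm ⁻¹' I, ENNReal.ofReal (‖y‖ ^ p) ∂μ
      = ∫⁻ y, I.indicator (fun r => ENNReal.ofReal (r ^ p)) ‖y‖ ∂μ := by
        rw [← lintegral_indicator (measurable_norm hI)]
        rfl
    _ = μ.toSphere univ *
          ∫⁻ r in I ∩ Ioi 0, ENNReal.ofReal (r ^ (p + finrank ℝ E - 1)) := by
        rw [lintegral_fun_norm_addHaar μ (Measurable.indicator (by fun_prop) hI),
          setLIntegral_congr_fun measurableSet_Ioi hjac, setLIntegral_indicator hI]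
    _ = _ := by
        have hpos : ∀ᵐ r ∂volume.restrict (I ∩ Ioi 0), 0 ≤ r ^ (p + finrank ℝ E - 1) :=
          (ae_restrict_mem (hI.inter measurableSet_Ioi)).mono fun r hr => rpow_nonneg hr.2.le _
        rw [ENNReal.ofReal_mul measureReal_nonneg, ofReal_measureReal,
          ofReal_integral_eq_lintegral_ofReal hint hpos]

lemma setLIntegral_closedBall_norm_sub_rpow {p a : ℝ} (x : E) (ha : 0 ≤ a)
    (hp : 0 < p + finrank ℝ E) :
    ∫⁻ y in Metric.closedBall x a, ENNReal.ofReal (‖x - y‖ ^ p) ∂μ =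
      ENNReal.ofReal (μ.toSphere.real univ * (a ^ (p + finrank ℝ E) / (p + finrank ℝ E))) := by
  have hI : Iic a ∩ Ioi 0 = Ioc 0 a := by rw [inter_comm, Ioi_inter_Iic]
  have hint : IntegrableOn (fun r : ℝ => r ^ (p + finrank ℝ E - 1)) (Ioc 0 a) :=
    (intervalIntegrable_iff_integrableOn_Ioc_of_le ha).1
      (intervalIntegral.intervalIntegrable_rpow' (by linarith))
  calc ∫⁻ y in Metric.closedBall x a, ENNReal.ofReal (‖x - y‖ ^ p) ∂μ
      = ∫⁻ y in norm ⁻¹' Iic a, ENNReal.ofReal (‖y‖ ^ p) ∂μ := by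
        rw [← lintegral_indicator Metric.isClosed_closedBall.measurableSet,
          ← lintegral_indicator (measurable_norm measurableSet_Iic),
          ← lintegral_sub_right_eq_self ((norm ⁻¹' Iic a).indicator _) x]
        simp [indicator, dist_eq_norm, norm_sub_rev x]
    _ = _ := by
        rw [setLIntegral_preimage_norm_rpow μ measurableSet_Iic (hI ▸ hint), hI,
          ← intervalIntegral.integral_of_le ha, integral_rpow (.inl (by linarith))]
        simp [zero_rpow hp.ne']

lemma setLIntegral_preimage_norm_Ioi_rpow {p a : ℝ} (ha : 0 < a) (hp : p + finrank ℝ E < 0) :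
    ∫⁻ y in norm ⁻¹' Ioi a, ENNReal.ofReal (‖y‖ ^ p) ∂μ =
      ENNReal.ofReal (μ.toSphere.real univ * (a ^ (p + finrank ℝ E) / -(p + finrank ℝ E))) := by
  have hI : Ioi a ∩ Ioi 0 = Ioi a := inter_eq_left.2 (Ioi_subset_Ioi ha.le)
  have hp' : p + finrank ℝ E - 1 < -1 := by linarith
  rw [setLIntegral_preimage_norm_rpow μ measurableSet_Ioi
      (hI.symm ▸ integrableOn_Ioi_rpow_of_lt hp' ha), hI, integral_Ioi_rpow_of_lt hp' ha,
    sub_add_cancel, neg_div, div_neg]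

lemma setLIntegral_preimage_norm_Ioc_rpow {p a b : ℝ} (ha : 0 < a) (hab : a ≤ b) :
    ∫⁻ y in norm ⁻¹' Ioc a b, ENNReal.ofReal (‖y‖ ^ p) ∂μ =
      ENNReal.ofReal (μ.toSphere.real univ * ∫ r in a..b, r ^ (p + finrank ℝ E - 1)) := by
  have hI : Ioc a b ∩ Ioi 0 = Ioc a b := inter_eq_left.2 fun r hr => ha.trans hr.1
  have hint : IntegrableOn (fun r : ℝ => r ^ (p + finrank ℝ E - 1)) (Ioc a b) :=
    (intervalIntegrable_iff_integrableOn_Ioc_of_le hab).1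
      (intervalIntegral.intervalIntegrable_rpow (.inr (notMem_uIcc_of_lt ha (ha.trans_le hab))))
  rw [setLIntegral_preimage_norm_rpow μ measurableSet_Ioc (hI.symm ▸ hint), hI,
    intervalIntegral.integral_of_le hab]

variable {α β τ ρ : ℝ}

lemma exists_setLIntegral_logWeight_Ioi_le (hτ : 0 ≤ τ) (hρ : 0 < ρ) (hβ : finrank ℝ E < β) :
    ∃ C > 0, ∀ R ≥ ρ, ∫⁻ y in norm ⁻¹' Ioi R, ENNReal.ofReal (logWeight β τ ‖y‖) ∂μ ≤
      ENNReal.ofReal (C * (R ^ (finrank ℝ E - β) * log (1 + R) ^ τ)) := by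
  have hκ := toSphere_real_univ_pos μ
  set η := (β - finrank ℝ E) / 2 with hη_def
  have hη : 0 < η := by linarith
  obtain ⟨M, hM, hgrowth⟩ := exists_log_one_add_rpow_le_mul_rpow hρ hτ hη
  refine ⟨M * (μ.toSphere.real univ / η), by positivity, fun R hR => ?_⟩
  have hR₀ : 0 < R := hρ.trans_le hR
  have hlogR : 0 ≤ log (1 + R) := log_nonneg (by linarith)
  set A := M * R ^ (-η) * log (1 + R) ^ τ
  have hA : 0 ≤ A := by positivity
  have hweight : ∀ r > R, logWeight β τ r ≤ A * r ^ (η - β) := fun r hr => by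
    have hr₀ : 0 < r := hR₀.trans hr
    calc logWeight β τ r ≤ r ^ (-β) * (M * (r / R) ^ η * log (1 + R) ^ τ) := by
          unfold logWeight
          gcongr
          exact hgrowth R hR r hr.le
      _ = A * r ^ (η - β) := by
          rw [div_rpow hr₀.le hR₀.le, sub_eq_add_neg, rpow_add hr₀]
          simp only [A, rpow_neg hR₀.le]
          ring
  calc ∫⁻ y in norm ⁻¹' Ioi R, ENNReal.ofReal (logWeight β τ ‖y‖) ∂μ
      ≤ ENNReal.ofReal A * ∫⁻ y in norm ⁻¹' Ioi R, ENNReal.ofReal (‖y‖ ^ (η - β)) ∂μ :=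
        setLIntegral_ofReal_le_mul hA (by fun_prop) fun y hy => hweight ‖y‖ hy
    _ = ENNReal.ofReal (A * (μ.toSphere.real univ * (R ^ (-η) / η))) := by
        rw [setLIntegral_preimage_norm_Ioi_rpow μ hR₀ (by linarith), ← ENNReal.ofReal_mul hA,
          show η - β + finrank ℝ E = -η by linarith, neg_neg]
    _ = _ := by
        rw [show finrank ℝ E - β = -η + -η by linarith, rpow_add hR₀]
        congr 1
        ring

lemma exists_logWeightPotential_Ioi_le (hτ : 0 ≤ τ) (hρ : 0 < ρ) (hβ : finrank ℝ E - α < β) :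
    ∃ C > 0, ∀ x : E, ρ ≤ ‖x‖ → logWeightPotential μ (norm ⁻¹' Ioi (2 * ‖x‖)) α β τ x ≤
      ENNReal.ofReal (C * (‖x‖ ^ (finrank ℝ E - α - β) * log (1 + ‖x‖) ^ τ)) := by
  obtain ⟨C, hC, htail⟩ := exists_setLIntegral_logWeight_Ioi_le μ (β := α + β) hτ hρ (by linarith)
  refine ⟨2 ^ |α| * C, by positivity, fun x hx => ?_⟩
  have hkernel : ∀ y ∈ norm ⁻¹' Ioi (2 * ‖x‖),
      logWeight β τ ‖y‖ * ‖x - y‖ ^ (-α) ≤ 2 ^ |α| * logWeight (α + β) τ ‖y‖ := by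
    intro y (hy : 2 * ‖x‖ < ‖y‖)
    have hy₀ : 0 < ‖y‖ := by linarith [norm_nonneg x]
    have hdist : ‖x - y‖ ^ (-α) ≤ 2 ^ |α| * ‖y‖ ^ (-α) := by
      simpa using norm_sub_rpow_le_of_two_mul_norm_le (-α) hy₀ hy.le
    calc logWeight β τ ‖y‖ * ‖x - y‖ ^ (-α)
        ≤ logWeight β τ ‖y‖ * (2 ^ |α| * ‖y‖ ^ (-α)) :=
          mul_le_mul_of_nonneg_left hdist (logWeight_nonneg β τ hy₀.le)
      _ = 2 ^ |α| * logWeight (α + β) τ ‖y‖ := by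
          rw [logWeight, logWeight, neg_add, rpow_add hy₀]
          ring
  calc logWeightPotential μ (norm ⁻¹' Ioi (2 * ‖x‖)) α β τ x
      ≤ ENNReal.ofReal (2 ^ |α|) * ∫⁻ y in norm ⁻¹' Ioi (2 * ‖x‖),
          ENNReal.ofReal (logWeight (α + β) τ ‖y‖) ∂μ :=
        setLIntegral_ofReal_le_mul (by positivity) (by fun_prop) hkernel
    _ ≤ ENNReal.ofReal (2 ^ |α|) *
          ∫⁻ y in norm ⁻¹' Ioi ‖x‖, ENNReal.ofReal (logWeight (α + β) τ ‖y‖) ∂μ := by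
        gcongr
        linarith [norm_nonneg x]
    _ ≤ ENNReal.ofReal (2 ^ |α|) * ENNReal.ofReal
          (C * (‖x‖ ^ (finrank ℝ E - (α + β)) * log (1 + ‖x‖) ^ τ)) := by
        gcongr
        exact htail ‖x‖ hx
    _ = _ := by
        rw [← ENNReal.ofReal_mul (by positivity), sub_sub, mul_assoc]

lemma exists_logWeightPotential_Ioc_le (hα : α < finrank ℝ E) (hτ : 0 ≤ τ) :
    ∃ C > 0, ∀ x : E, x ≠ 0 →
      logWeightPotential μ (norm ⁻¹' Ioc (‖x‖ / 2) (2 * ‖x‖)) α β τ x ≤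
        ENNReal.ofReal (C * (‖x‖ ^ (finrank ℝ E - α - β) * log (1 + ‖x‖) ^ τ)) := by
  have hκ := toSphere_real_univ_pos μ
  have hp : 0 < -α + finrank ℝ E := by linarith
  set K := μ.toSphere.real univ * (3 ^ (-α + finrank ℝ E) / (-α + finrank ℝ E))
  refine ⟨2 ^ |β| * 2 ^ τ * K, by positivity, fun x hx => ?_⟩
  have hx₀ : 0 < ‖x‖ := norm_pos_iff.2 hx
  set A := 2 ^ |β| * 2 ^ τ * logWeight β τ ‖x‖
  have hA : 0 ≤ A := mul_nonneg (by positivity) (logWeight_nonneg β τ hx₀.le)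
  have hball : norm ⁻¹' Ioc (‖x‖ / 2) (2 * ‖x‖) ⊆ Metric.closedBall x (3 * ‖x‖) := by
    intro y hy
    rw [mem_closedBall_iff_norm]
    linarith [norm_sub_le y x, hy.2]
  calc logWeightPotential μ (norm ⁻¹' Ioc (‖x‖ / 2) (2 * ‖x‖)) α β τ x
      ≤ ENNReal.ofReal A * ∫⁻ y in norm ⁻¹' Ioc (‖x‖ / 2) (2 * ‖x‖),
          ENNReal.ofReal (‖x - y‖ ^ (-α)) ∂μ :=
        setLIntegral_ofReal_le_mul hA (by fun_prop) fun y hy => by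
          gcongr
          exact logWeight_le_of_mem_Ioc β hτ hx₀ hy
    _ ≤ ENNReal.ofReal A *
          ∫⁻ y in Metric.closedBall x (3 * ‖x‖), ENNReal.ofReal (‖x - y‖ ^ (-α)) ∂μ := by
        gcongr
    _ = _ := by
        rw [setLIntegral_closedBall_norm_sub_rpow μ x (by positivity) hp,
          ← ENNReal.ofReal_mul hA, show finrank ℝ E - α - β = -β + (-α + finrank ℝ E) by ring,
          rpow_add hx₀, mul_rpow zero_le_three hx₀.le]
        simp only [A, K, logWeight]
        congr 1
        ring

lemma logWeightPotential_Ioc_le (hτ : 0 ≤ τ) (hρ : 0 < ρ) {x : E} (hx : ρ ≤ ‖x‖) :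
    logWeightPotential μ (norm ⁻¹' Ioc ρ (‖x‖ / 2)) α β τ x ≤
      ENNReal.ofReal (2 ^ |α| * μ.toSphere.real univ *
        (‖x‖ ^ (-α) * log (1 + ‖x‖) ^ τ * ∫ r in ρ..‖x‖, r ^ (finrank ℝ E - β - 1))) := by
  have hx₀ : 0 < ‖x‖ := hρ.trans_le hx
  have hlogx : 0 ≤ log (1 + ‖x‖) := log_nonneg (by linarith)
  set A := 2 ^ |α| * ‖x‖ ^ (-α) * log (1 + ‖x‖) ^ τ
  have hA : 0 ≤ A := by positivity
  have hkernel : ∀ y ∈ norm ⁻¹' Ioc ρ (‖x‖ / 2),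
      logWeight β τ ‖y‖ * ‖x - y‖ ^ (-α) ≤ A * ‖y‖ ^ (-β) := by
    intro y ⟨hy, hy'⟩
    have hy₀ : 0 < ‖y‖ := hρ.trans hy
    have hdist : ‖x - y‖ ^ (-α) ≤ 2 ^ |α| * ‖x‖ ^ (-α) := by
      simpa [norm_sub_rev] using
        norm_sub_rpow_le_of_two_mul_norm_le (x := y) (-α) hx₀ (by linarith)
    have hlogy : 0 ≤ log (1 + ‖y‖) := log_nonneg (by linarith)
    calc logWeight β τ ‖y‖ * ‖x - y‖ ^ (-α)
        ≤ ‖y‖ ^ (-β) * log (1 + ‖x‖) ^ τ * (2 ^ |α| * ‖x‖ ^ (-α)) := by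
          unfold logWeight
          gcongr
          linarith
      _ = A * ‖y‖ ^ (-β) := by ring
  calc logWeightPotential μ (norm ⁻¹' Ioc ρ (‖x‖ / 2)) α β τ x
      ≤ ENNReal.ofReal A * ∫⁻ y in norm ⁻¹' Ioc ρ (‖x‖ / 2), ENNReal.ofReal (‖y‖ ^ (-β)) ∂μ :=
        setLIntegral_ofReal_le_mul hA (by fun_prop) hkernel
    _ ≤ ENNReal.ofReal A * ∫⁻ y in norm ⁻¹' Ioc ρ ‖x‖, ENNReal.ofReal (‖y‖ ^ (-β)) ∂μ := by
        gcongr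
        linarith
    _ = _ := by
        rw [setLIntegral_preimage_norm_Ioc_rpow μ hρ hx, ← ENNReal.ofReal_mul hA,
          neg_add_eq_sub]
        congr 1
        ring

lemma exists_logWeightPotential_le (hα : α < finrank ℝ E) (hτ : 0 ≤ τ) (hρ : 0 < ρ)
    (hβ : finrank ℝ E - α < β) :
    ∃ C > 0, ∀ x : E, ρ ≤ ‖x‖ → logWeightPotential μ (norm ⁻¹' Ioi ρ) α β τ x ≤
      ENNReal.ofReal (C * (‖x‖ ^ (-α) * log (1 + ‖x‖) ^ τ *
        (‖x‖ ^ (finrank ℝ E - β) + ∫ r in ρ..‖x‖, r ^ (finrank ℝ E - β - 1)))) := by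
  obtain ⟨C₁, hC₁, hmiddle⟩ := exists_logWeightPotential_Ioc_le μ (β := β) hα hτ
  obtain ⟨C₂, hC₂, houter⟩ := exists_logWeightPotential_Ioi_le μ hτ hρ hβ
  set C₀ := 2 ^ |α| * μ.toSphere.real univ
  have hC₀ : 0 < C₀ := mul_pos (by positivity) (toSphere_real_univ_pos μ)
  refine ⟨C₀ + C₁ + C₂, add_pos (add_pos hC₀ hC₁) hC₂, fun x hx => ?_⟩
  have hx₀ : 0 < ‖x‖ := hρ.trans_le hx
  set G := ‖x‖ ^ (-α) * log (1 + ‖x‖) ^ τ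
  set P := ‖x‖ ^ (finrank ℝ E - β)
  set J := ∫ r in ρ..‖x‖, r ^ (finrank ℝ E - β - 1)
  have hG : 0 ≤ G := logWeight_nonneg α τ hx₀.le
  have hGP : 0 ≤ G * P := mul_nonneg hG (by positivity)
  have hGJ : 0 ≤ G * J := mul_nonneg hG <|
    intervalIntegral.integral_nonneg hx fun r hr => rpow_nonneg (hρ.le.trans hr.1) _
  have hrate : ‖x‖ ^ (finrank ℝ E - α - β) * log (1 + ‖x‖) ^ τ = G * P := by
    rw [show finrank ℝ E - α - β = -α + (finrank ℝ E - β) by ring, rpow_add hx₀]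
    ring
  calc logWeightPotential μ (norm ⁻¹' Ioi ρ) α β τ x
      ≤ ENNReal.ofReal (C₀ * (G * J)) +
          (ENNReal.ofReal (C₁ * (G * P)) + ENNReal.ofReal (C₂ * (G * P))) :=
        (logWeightPotential_Ioi_le_add μ α β τ ρ x (by linarith)).trans <|
          add_le_add (logWeightPotential_Ioc_le μ hτ hρ hx) <|
            add_le_add (hrate ▸ hmiddle x (norm_pos_iff.1 hx₀)) (hrate ▸ houter x hx)
    _ = ENNReal.ofReal (C₀ * (G * J) + (C₁ * (G * P) + C₂ * (G * P))) := by
        rw [← ENNReal.ofReal_add (by positivity) (by positivity),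
          ← ENNReal.ofReal_add (by positivity) (by positivity)]
    _ ≤ ENNReal.ofReal ((C₀ + C₁ + C₂) * (G * (P + J))) := by
        have hcross : 0 ≤ C₀ * (G * P) + (C₁ + C₂) * (G * J) := by positivity
        exact ENNReal.ofReal_le_ofReal (by linarith)

theorem conv_upper_bounds_general (hα : α < finrank ℝ E) (hτ : 0 ≤ τ) (hρ : 0 < ρ)
    (hβ : finrank ℝ E - α < β) {S : Set E} (hS : ∀ y ∈ S, ρ < ‖y‖) {f : E → ℝ≥0∞} {c : ℝ}
    (hc : 0 < c)
    (hf : ∀ y ∈ S, f y ≤ ENNReal.ofReal (c * ‖y‖ ^ (-β) * log (1 + ‖y‖) ^ τ)) :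
    ∃ C > 0, ∀ x : E, ρ ≤ ‖x‖ →
      (β < finrank ℝ E →
        ∫⁻ y in S, f y * ENNReal.ofReal (‖x - y‖ ^ (-α)) ∂μ ≤
          ENNReal.ofReal (C * ‖x‖ ^ (finrank ℝ E - α - β) * log (1 + ‖x‖) ^ τ)) ∧
      (β = finrank ℝ E →
        ∫⁻ y in S, f y * ENNReal.ofReal (‖x - y‖ ^ (-α)) ∂μ ≤
          ENNReal.ofReal (C * ‖x‖ ^ (-α) * log (1 + ‖x‖) ^ (1 + τ))) ∧
      (finrank ℝ E < β →
        ∫⁻ y in S, f y * ENNReal.ofReal (‖x - y‖ ^ (-α)) ∂μ ≤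
          ENNReal.ofReal (C * ‖x‖ ^ (-α) * log (1 + ‖x‖) ^ τ)) := by
  obtain ⟨A, hA, hpot⟩ := exists_logWeightPotential_le μ hα hτ hρ hβ
  obtain ⟨B, hB, hrad⟩ := exists_rpow_add_integral_rpow_sub_one_le (finrank ℝ E - β) hρ
  refine ⟨c * A * B, by positivity, fun x hx => ?_⟩
  have hx₀ : 0 < ‖x‖ := hρ.trans_le hx
  have hlogx : 0 < log (1 + ‖x‖) := log_pos (by linarith)
  have hconv {G : ℝ} (hG : ‖x‖ ^ (finrank ℝ E - β) +
      ∫ r in ρ..‖x‖, r ^ (finrank ℝ E - β - 1) ≤ G) :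
      ∫⁻ y in S, f y * ENNReal.ofReal (‖x - y‖ ^ (-α)) ∂μ ≤
        ENNReal.ofReal (c * A * (‖x‖ ^ (-α) * log (1 + ‖x‖) ^ τ * G)) := by
    rw [mul_assoc c, ENNReal.ofReal_mul hc.le]
    refine (setLIntegral_mul_le_mul_logWeightPotential μ hS hc.le
      (fun y hy => by simpa only [logWeight, mul_assoc] using hf y hy) x).trans ?_
    gcongr
    exact (hpot x hx).trans (by gcongr)
  refine ⟨fun hβd => (hconv ((hrad ‖x‖ hx).1 (by linarith))).trans_eq ?_,
    fun hβd => (hconv ((hrad ‖x‖ hx).2.1 (by linarith))).trans_eq ?_,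
    fun hβd => (hconv ((hrad ‖x‖ hx).2.2 (by linarith))).trans_eq ?_⟩
  · rw [show finrank ℝ E - α - β = -α + (finrank ℝ E - β) by ring, rpow_add hx₀]
    ring_nf
  · rw [rpow_add hlogx, rpow_one]
    ring_nf
  · ring_nf

end HaarMeasure

/-- Lemma 2.2(iii): upper bounds for the convolution of a function dominated by
`c|x|^{-β} log^τ(1+|x|)` with `β > N - α > 0`. -/
theorem conv_upper_bounds
    (N : ℕ) (hN : 2 ≤ N) (Ω : Set (Euc N)) (hΩ : IsConeDomain N Ω)
    (ρ α τ β : ℝ) (hρ : 0 < ρ) (hα : 0 ≤ α) (hαN : α < N) (hτ : 0 ≤ τ)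
    (hβ : (N : ℝ) - α < β)
    (f : Euc N → ℝ) (hmeas : Measurable f) (hf0 : ∀ y, 0 ≤ f y)
    (c : ℝ) (hc : 0 < c)
    (hupper : ∀ x ∈ coneGT N ρ Ω, f x ≤ c * ‖x‖ ^ (-β) * (Real.log (1 + ‖x‖)) ^ τ) :
    ∃ C > 0, ∀ x ∈ coneGT N (2 * ρ) Ω,
      (β < (N : ℝ) →
        (∫⁻ y in coneGT N ρ Ω, ENNReal.ofReal (f y * ‖x - y‖ ^ (-α))) ≤
          ENNReal.ofReal (C * ‖x‖ ^ ((N : ℝ) - α - β) * (Real.log (1 + ‖x‖)) ^ τ)) ∧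
      (β = (N : ℝ) →
        (∫⁻ y in coneGT N ρ Ω, ENNReal.ofReal (f y * ‖x - y‖ ^ (-α))) ≤
          ENNReal.ofReal (C * ‖x‖ ^ (-α) * (Real.log (1 + ‖x‖)) ^ (1 + τ))) ∧
      ((N : ℝ) < β →
        (∫⁻ y in coneGT N ρ Ω, ENNReal.ofReal (f y * ‖x - y‖ ^ (-α))) ≤
          ENNReal.ofReal (C * ‖x‖ ^ (-α) * (Real.log (1 + ‖x‖)) ^ τ)) := by
  have : Nontrivial (Euc N) := Module.nontrivial_of_finrank_pos (R := ℝ) (by simp; omega)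
  obtain ⟨C, hC, hbound⟩ := conv_upper_bounds_general (volume : Measure (Euc N)) (S := coneGT N ρ Ω)
    (f := fun y => ENNReal.ofReal (f y)) (by simpa using hαN) hτ hρ (by simpa using hβ)
    (fun y hy => hy.1) hc (fun y hy => ENNReal.ofReal_le_ofReal (hupper y hy))
  refine ⟨C, hC, fun x hx => ?_⟩
  simpa [ENNReal.ofReal_mul', rpow_nonneg] using hbound x (by linarith [hx.1])
end
end
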